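/- Let P_1, …, P_m ∈ ℤ[y]_0 be linearly independent over ℚ. Then there exist constants c, γ, C > 0 (depending only on P_1, …, P_m) such that for every finite field 𝔽_q whose characteristic is at least c and every subset A ⊆ 𝔽_q, one has |#{(x,y) ∈ 𝔽_q × 𝔽_q : x, x+P_1(y), …, x+P_m(y) ∈ A} − |A|^{m+1}/q^{m−1}| ≤ C·q^{2−(m+1)γ}. -/

import Mathlib

open Polynomial

/-!
Each count is an average over the field. Repeated applications of van der Corput's inequality (PET
induction) bound it by a Gowers norm of a dual function, obtained by averaging over `y` all the
weights except the one attached to a chosen polynomial. The dual function has more structure than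
an arbitrary one: degree lowering shows that if its `U^{s+1}` norm is large, then so is its `U^s`
norm, down to `U²`. There Fourier inversion yields a correlation of the dual function with an
additive character, that is, a count along one polynomial less, twisted by a character phase.
Induction on the number of polynomials, with Weyl's bound for exponential sums as the base case,
shows that twisted counts without a main term save a power of `q`. The main term of the untwisted
count comes out by replacing the weights one after the other by their means. Integer polynomials
stay linearly independent modulo all large primes since the Gram determinant of their coefficient
vectors is a nonzero integer.
-/

namespace PolynomialProgressions

open Finset
open scoped BigOperators ComplexConjugate

universe u

section Averages

variable {ι κ : Type*} [Fintype ι] [Fintype κ]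

lemma norm_expect_le_expect_norm (f : ι → ℂ) : ‖𝔼 i, f i‖ ≤ 𝔼 i, ‖f i‖ :=
  RCLike.norm_expect_le (K := ℝ)

lemma conj_expect (f : ι → ℂ) : conj (𝔼 i, f i) = 𝔼 i, conj (f i) := by
  simp [Fintype.expect_eq_sum_div_card]

lemma ofReal_expect (f : ι → ℝ) : ((𝔼 i, f i : ℝ) : ℂ) = 𝔼 i, (f i : ℂ) := by
  simp [Fintype.expect_eq_sum_div_card]

lemma expect_prod_type {M : Type*} [AddCommMonoid M] [Module ℚ≥0 M] (f : ι → κ → M) :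
    𝔼 p : ι × κ, f p.1 p.2 = 𝔼 i, 𝔼 j, f i j := by
  rw [← expect_product', univ_product_univ]

lemma expect_fin_succ {α M : Type*} [Fintype α] [AddCommMonoid M] [Module ℚ≥0 M] {s : ℕ}
    (f : (Fin (s + 1) → α) → M) :
    𝔼 h, f h = 𝔼 a : α, 𝔼 r : Fin s → α, f (Fin.cons a r) := by
  rw [← expect_prod_type fun a r => f (Fin.cons a r)]
  exact (Fintype.expect_equiv (Fin.consEquiv fun _ => α) _ _ fun _ => rfl).symm

lemma expect_add_right {G M : Type*} [AddGroup G] [Fintype G] [AddCommMonoid M] [Module ℚ≥0 M]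
    (a : G) (f : G → M) : 𝔼 x, f (x + a) = 𝔼 x, f x :=
  Fintype.expect_equiv (Equiv.addRight a) _ _ fun _ => rfl

lemma expect_pow_le_expect_pow {f : ι → ℝ} (hf : ∀ i, 0 ≤ f i) {k : ℕ} (hk : k ≠ 0) :
    (𝔼 i, f i) ^ k ≤ 𝔼 i, f i ^ k := by
  rcases isEmpty_or_nonempty ι with h | h
  · simp [hk]
  have := Real.pow_arith_mean_le_arith_mean_pow univ (fun _ : ι => (Fintype.card ι : ℝ)⁻¹) f
    (fun i _ => by positivity) (by simp) (fun i _ => hf i) k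
  simpa [Fintype.expect_eq_sum_div_card, ← mul_sum, div_eq_inv_mul] using this

lemma norm_expect_pow_le (f : ι → ℂ) {k : ℕ} (hk : k ≠ 0) : ‖𝔼 i, f i‖ ^ k ≤ 𝔼 i, ‖f i‖ ^ k :=
  (pow_le_pow_left₀ (norm_nonneg _) (norm_expect_le_expect_norm f) k).trans
    (expect_pow_le_expect_pow (fun _ => norm_nonneg _) hk)

lemma exists_expect_le [Nonempty ι] (f : ι → ℝ) : ∃ i, 𝔼 j, f j ≤ f i := by
  obtain ⟨i, -, h⟩ := exists_le_of_le_expect (univ_nonempty (α := ι)) (le_refl (𝔼 j, f j))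
  exact ⟨i, h⟩

lemma ofReal_sq_norm_expect (v : ι → ℂ) :
    ((‖𝔼 y, v y‖ ^ 2 : ℝ) : ℂ) = 𝔼 y, 𝔼 y', v y * conj (v y') := by
  rw [← expect_mul_expect, ← conj_expect, Complex.mul_conj, Complex.normSq_eq_norm_sq]

lemma ofReal_sq_norm_expect_eq_shift {G : Type*} [AddCommGroup G] [Fintype G] (v : G → ℂ) :
    ((‖𝔼 y, v y‖ ^ 2 : ℝ) : ℂ) = 𝔼 h, 𝔼 y, v (y + h) * conj (v y) := by
  rw [ofReal_sq_norm_expect, expect_comm,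
    expect_comm (f := fun h y => v (y + h) * conj (v y))]
  refine expect_congr rfl fun y _ => ?_
  rw [← expect_add_right y]
  simp only [add_comm]

end Averages

section OneBounded

variable {α ι : Type*}

/-- A complex function is `1`-bounded if all its values have norm at most `1`. -/
def OneBounded (f : α → ℂ) : Prop := ∀ x, ‖f x‖ ≤ 1

lemma OneBounded.mul {f g : α → ℂ} (hf : OneBounded f) (hg : OneBounded g) :
    OneBounded fun x => f x * g x := fun x => by
  rw [norm_mul]
  exact mul_le_one₀ (hf x) (norm_nonneg _) (hg x)

lemma OneBounded.conj {f : α → ℂ} (hf : OneBounded f) : OneBounded fun x => conj (f x) :=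
  fun x => by simpa using hf x

lemma OneBounded.prod [Fintype ι] {f : ι → α → ℂ} (hf : ∀ i, OneBounded (f i)) :
    OneBounded fun x => ∏ i, f i x := fun x => by
  rw [norm_prod]
  exact prod_le_one (fun i _ => norm_nonneg _) fun i _ => hf i x

lemma OneBounded.norm_expect_le [Fintype ι] {f : ι → ℂ} (hf : OneBounded f) :
    ‖𝔼 i, f i‖ ≤ 1 := by
  rcases isEmpty_or_nonempty ι with h | h
  · simp
  exact (norm_expect_le_expect_norm f).trans (expect_le univ_nonempty fun i _ => hf i)

lemma OneBounded.sq_norm_expect_mul_le [Fintype ι] {a : ι → ℂ} (ha : OneBounded a) (b : ι → ℂ) :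
    ‖𝔼 i, a i * b i‖ ^ 2 ≤ 𝔼 i, ‖b i‖ ^ 2 := by
  refine (norm_expect_pow_le _ two_ne_zero).trans (expect_le_expect fun i _ => ?_)
  rw [norm_mul]
  exact pow_le_pow_left₀ (by positivity) (mul_le_of_le_one_left (norm_nonneg _) (ha i)) 2

end OneBounded

section Gowers

variable {G : Type*} [AddCommGroup G]

/-- The multiplicative derivative `Δ_h f (x) = f (x + h) * conj (f x)`. -/
noncomputable def mulDiff (h : G) (f : G → ℂ) : G → ℂ := fun x => f (x + h) * conj (f x)

/-- The iterated multiplicative derivative `Δ_{h₀} ⋯ Δ_{hₛ₋₁} f`. -/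
noncomputable def iterMulDiff : (s : ℕ) → (Fin s → G) → (G → ℂ) → G → ℂ
  | 0, _, f => f
  | s + 1, h, f => iterMulDiff s (Fin.tail h) (mulDiff (h 0) f)

protected lemma OneBounded.mulDiff {f : G → ℂ} (hf : OneBounded f) (h : G) :
    OneBounded (mulDiff h f) :=
  OneBounded.mul (fun x => hf (x + h)) hf.conj

protected lemma OneBounded.iterMulDiff {s : ℕ} {f : G → ℂ} (hf : OneBounded f) (h : Fin s → G) :
    OneBounded (iterMulDiff s h f) := by
  induction s generalizing f with
  | zero => exact hf
  | succ s ih => exact ih (hf.mulDiff _) _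

lemma mulDiff_comm (a b : G) (f : G → ℂ) :
    mulDiff a (mulDiff b f) = mulDiff b (mulDiff a f) := by
  ext x
  simp only [mulDiff, map_mul, Complex.conj_conj]
  rw [add_right_comm]
  ring

lemma mulDiff_iterMulDiff (k : G) {s : ℕ} (h : Fin s → G) (f : G → ℂ) :
    mulDiff k (iterMulDiff s h f) = iterMulDiff s h (mulDiff k f) := by
  induction s generalizing f with
  | zero => rfl
  | succ s ih => simp only [iterMulDiff, ih, mulDiff_comm]

variable [Fintype G]

/-- The power `‖f‖_{U^{s+1}} ^ 2 ^ (s + 1)` of the Gowers uniformity norm of degree `s + 1`, by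
recursion on `s`. The index is shifted since the `U⁰`-average of `f` need not be real. -/
noncomputable def gowersPow : ℕ → (G → ℂ) → ℝ
  | 0, f => ‖𝔼 x, f x‖ ^ 2
  | s + 1, f => 𝔼 h, gowersPow s (mulDiff h f)

lemma gowersPow_nonneg (s : ℕ) (f : G → ℂ) : 0 ≤ gowersPow s f := by
  induction s generalizing f with
  | zero => exact sq_nonneg _
  | succ s ih => exact expect_nonneg fun h _ => ih _

lemma gowersPow_translate (s : ℕ) (a : G) (f : G → ℂ) :
    gowersPow s (fun x => f (x + a)) = gowersPow s f := by
  induction s generalizing f with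
  | zero => rw [gowersPow, gowersPow, expect_add_right a f]
  | succ s ih =>
    refine expect_congr rfl fun h _ => ?_
    rw [← ih (mulDiff h f)]
    congr 1
    ext x
    simp only [mulDiff, add_right_comm _ h a]

lemma gowersPow_add (t s : ℕ) (f : G → ℂ) :
    gowersPow (t + s) f = 𝔼 h : Fin s → G, gowersPow t (iterMulDiff s h f) := by
  induction s generalizing f with
  | zero => simp [iterMulDiff]
  | succ s ih =>
    rw [← add_assoc, gowersPow, expect_fin_succ]
    simp only [ih, iterMulDiff, Fin.tail_cons, Fin.cons_zero]

lemma expect_gowersPow_mul_conj_translate (s : ℕ) (f : G → ℂ) :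
    𝔼 a, 𝔼 a', gowersPow s (fun t => f (a + t) * conj (f (a' + t))) = gowersPow (s + 1) f := by
  have translate_eq (a' a : G) :
      gowersPow s (fun t => f (a + a' + t) * conj (f (a' + t))) = gowersPow s (mulDiff a f) := by
    rw [← gowersPow_translate s a' (mulDiff a f)]
    congr 1
    ext t
    simp only [mulDiff, add_comm, add_left_comm]
  rw [expect_comm, gowersPow, ← Fintype.expect_const (ι := G) (𝔼 h, gowersPow s (mulDiff h f))]
  refine expect_congr rfl fun a' _ => ?_
  rw [← expect_add_right a']
  exact expect_congr rfl fun a _ => translate_eq a' a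

end Gowers

section LowerRank

variable {α R : Type*} {s : ℕ}

/-- A function of `s` variables is a lower rank product if it is a product of `1`-bounded functions
the `i`-th of which does not depend on the `i`-th variable. -/
def IsLowerRankProd (B : (Fin s → α) → ℂ) : Prop :=
  ∃ b : Fin s → (Fin s → α) → ℂ,
    (∀ i, OneBounded (b i) ∧ DependsOn (b i) {i}ᶜ) ∧ ∀ h, B h = ∏ i, b i h

/-- The additive analogue of `IsLowerRankProd`, for functions with values in an additive monoid and
without boundedness requirement. -/
def IsLowerRankSum [AddCommMonoid R] (ψ : (Fin s → α) → R) : Prop :=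
  ∃ φ : Fin s → (Fin s → α) → R, (∀ i, DependsOn (φ i) {i}ᶜ) ∧ ∀ h, ψ h = ∑ i, φ i h

lemma dependsOn_comp_tail {β : Type*} (f : (Fin s → α) → β) :
    DependsOn (fun h : Fin (s + 1) → α => f (Fin.tail h)) {0}ᶜ := fun x y hxy => by
  have : Fin.tail x = Fin.tail y := funext fun i => hxy i.succ (by simp)
  simp only [this]

lemma dependsOn_head_tail {β : Type*} {i : Fin s} {f : α → (Fin s → α) → β}
    (hf : ∀ a, DependsOn (f a) {i}ᶜ) :
    DependsOn (fun h : Fin (s + 1) → α => f (h 0) (Fin.tail h)) {i.succ}ᶜ := fun x y hxy => by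
  have : x 0 = y 0 := hxy 0 (by simp [Fin.ext_iff])
  simp only [this]
  exact hf _ fun j hj => hxy j.succ (by simpa using hj)

lemma IsLowerRankProd.mul {B C : (Fin s → α) → ℂ} (hB : IsLowerRankProd B)
    (hC : IsLowerRankProd C) : IsLowerRankProd fun h => B h * C h := by
  obtain ⟨b, hb, hBb⟩ := hB
  obtain ⟨c, hc, hCc⟩ := hC
  refine ⟨fun i h => b i h * c i h, fun i => ⟨(hb i).1.mul (hc i).1, fun x y hxy => ?_⟩,
    fun h => by simp only [hBb, hCc, prod_mul_distrib]⟩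
  simp only [(hb i).2 hxy, (hc i).2 hxy]

lemma IsLowerRankProd.conj {B : (Fin s → α) → ℂ} (hB : IsLowerRankProd B) :
    IsLowerRankProd fun h => conj (B h) := by
  obtain ⟨b, hb, hBb⟩ := hB
  refine ⟨fun i h => (starRingEnd ℂ) (b i h), fun i => ⟨(hb i).1.conj, fun x y hxy => ?_⟩,
    fun h => by simp only [hBb, map_prod]⟩
  simp only [(hb i).2 hxy]

lemma IsLowerRankProd.cons {b : (Fin s → α) → ℂ} (hb : OneBounded b)
    {B : α → (Fin s → α) → ℂ} (hB : ∀ a, IsLowerRankProd (B a)) :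
    IsLowerRankProd fun h : Fin (s + 1) → α => b (Fin.tail h) * B (h 0) (Fin.tail h) := by
  choose c hc hBc using hB
  refine ⟨Fin.cons (fun h => b (Fin.tail h)) fun i h => c (h 0) i (Fin.tail h), Fin.cases ?_ ?_,
    fun h => by simp only [Fin.prod_univ_succ, Fin.cons_zero, Fin.cons_succ, hBc]⟩
  · exact ⟨fun h => hb _, dependsOn_comp_tail b⟩
  · exact fun i => ⟨fun h => (hc _ i).1 _, dependsOn_head_tail fun a => (hc a i).2⟩

lemma IsLowerRankProd.exists_eq_mul {B : (Fin (s + 1) → α) → ℂ} (hB : IsLowerRankProd B) :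
    ∃ (b : (Fin s → α) → ℂ) (B' : α → (Fin s → α) → ℂ), OneBounded b ∧
      (∀ a, IsLowerRankProd (B' a)) ∧ ∀ a r, B (Fin.cons a r) = b r * B' a r := by
  obtain ⟨b, hb, hBb⟩ := hB
  rcases isEmpty_or_nonempty α with hα | ⟨⟨a₀⟩⟩
  · exact ⟨fun _ => 1, fun a => hα.elim a, fun _ => by simp, fun a => hα.elim a,
      fun a => hα.elim a⟩
  refine ⟨fun r => b 0 (Fin.cons a₀ r), fun a r => ∏ i : Fin s, b i.succ (Fin.cons a r),
    fun r => (hb 0).1 _, fun a => ⟨fun i r => b i.succ (Fin.cons a r),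
      fun i => ⟨fun r => (hb _).1 _, fun x y hxy => (hb _).2 ?_⟩, fun _ => rfl⟩, fun a r => ?_⟩
  · refine Fin.cases (by simp) fun j hj => ?_
    simpa using hxy j (by simpa using hj)
  · rw [hBb, Fin.prod_univ_succ, (hb 0).2 (x := Fin.cons a r) (y := Fin.cons a₀ r)]
    exact Fin.cases (by simp) fun j _ => by simp

lemma IsLowerRankSum.cons [AddCommMonoid R] (φ : (Fin s → α) → R)
    {ψ : α → (Fin s → α) → R} (hψ : ∀ a, IsLowerRankSum (ψ a)) :
    IsLowerRankSum fun h : Fin (s + 1) → α => φ (Fin.tail h) + ψ (h 0) (Fin.tail h) := by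
  choose c hc hψc using hψ
  refine ⟨Fin.cons (fun h => φ (Fin.tail h)) fun i h => c (h 0) i (Fin.tail h), Fin.cases ?_ ?_,
    fun h => by simp only [Fin.sum_univ_succ, Fin.cons_zero, Fin.cons_succ, hψc]⟩
  · exact dependsOn_comp_tail φ
  · exact fun i => dependsOn_head_tail fun a => hc a i

lemma IsLowerRankSum.isLowerRankProd_addChar [Ring R] [Finite R] (χ : AddChar R ℂ)
    {ψ : (Fin s → α) → R} (hψ : IsLowerRankSum ψ) (k : R) :
    IsLowerRankProd fun h => χ (ψ h * k) := by
  obtain ⟨φ, hφ, hψφ⟩ := hψ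
  refine ⟨fun i h => χ (φ i h * k),
    fun i => ⟨fun h => (AddChar.norm_apply χ _).le, fun x y hxy => ?_⟩,
    fun h => ?_⟩
  · simp only [hφ i hxy]
  · simp only [hψφ, sum_mul]
    exact map_prod χ.toMonoidHom (fun i => Multiplicative.ofAdd (φ i h * k)) univ

lemma OneBounded.exists_iterMulDiff_eq_mul {G : Type*} [AddCommGroup G] {f : G → ℂ}
    (hf : OneBounded f) :
    ∃ B : G → (Fin s → G) → ℂ, (∀ x, IsLowerRankProd (B x)) ∧
      ∀ x h, iterMulDiff s h f x = f (x + ∑ i, h i) * B x h := by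
  induction s generalizing f with
  | zero =>
    exact ⟨fun _ _ => 1, fun _ => ⟨fun i => i.elim0, fun i => i.elim0, by simp⟩,
      fun x h => by simp [iterMulDiff]⟩
  | succ s ih =>
    choose B hB hfB using fun a : G => ih (hf.mulDiff a)
    refine ⟨fun x h => conj (f (x + ∑ i, Fin.tail h i)) * B (h 0) x (Fin.tail h),
      fun x => .cons (b := fun r => (starRingEnd ℂ) (f (x + ∑ i, r i))) (fun r => hf.conj _)
        fun a => hB a x, fun x h => ?_⟩
    simp only [iterMulDiff, hfB, mulDiff, Fin.sum_univ_succ, Fin.tail]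
    rw [← mul_assoc, add_right_comm, add_assoc x (h 0)]

variable {Z : Type*} [Fintype Z] [Fintype α]

/- Cauchy–Schwarz in all variables but the first removes the factor independent of it. -/
lemma sq_norm_expect_mul_isLowerRankProd_le (A : Z → (Fin (s + 1) → α) → ℂ)
    {B : Z → (Fin (s + 1) → α) → ℂ} (hB : ∀ z, IsLowerRankProd (B z)) :
    ∃ B' : α → α → Z → (Fin s → α) → ℂ, (∀ a a' z, IsLowerRankProd (B' a a' z)) ∧
      ‖𝔼 z, 𝔼 h, A z h * B z h‖ ^ 2 ≤ 𝔼 a, 𝔼 a', ‖𝔼 z, 𝔼 r,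
        (A z (Fin.cons a r) * conj (A z (Fin.cons a' r))) * B' a a' z r‖ := by
  choose b B' hb hB' hBb using fun z => (hB z).exists_eq_mul
  refine ⟨fun a a' z r => B' z a r * conj (B' z a' r),
    fun a a' z => (hB' z a).mul (hB' z a').conj, ?_⟩
  let v (p : Z × (Fin s → α)) (a : α) : ℂ := A p.1 (Fin.cons a p.2) * B' p.1 a p.2
  have factor : 𝔼 z, 𝔼 h, A z h * B z h = 𝔼 p : Z × (Fin s → α), b p.1 p.2 * 𝔼 a, v p a := by
    rw [expect_prod_type fun z r => b z r * 𝔼 a, v (z, r) a]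
    refine expect_congr rfl fun z _ => ?_
    rw [expect_fin_succ, expect_comm]
    refine expect_congr rfl fun r _ => ?_
    rw [mul_expect]
    refine expect_congr rfl fun a _ => ?_
    rw [hBb, mul_left_comm]
  have expand : ((𝔼 p, ‖𝔼 a, v p a‖ ^ 2 : ℝ) : ℂ) = 𝔼 a, 𝔼 a', 𝔼 z, 𝔼 r,
      (A z (Fin.cons a r) * conj (A z (Fin.cons a' r))) * (B' z a r * conj (B' z a' r)) := by
    simp only [ofReal_expect, ofReal_sq_norm_expect]
    rw [expect_comm]
    refine expect_congr rfl fun a _ => ?_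
    rw [expect_comm]
    refine expect_congr rfl fun a' _ => ?_
    rw [← expect_prod_type fun z r => (A z (Fin.cons a r) * conj (A z (Fin.cons a' r))) *
      (B' z a r * conj (B' z a' r))]
    refine expect_congr rfl fun p _ => ?_
    rw [map_mul, mul_mul_mul_comm]
  calc ‖𝔼 z, 𝔼 h, A z h * B z h‖ ^ 2 ≤ 𝔼 p, ‖𝔼 a, v p a‖ ^ 2 := by
        simpa only [factor] using
          OneBounded.sq_norm_expect_mul_le (a := fun p => b p.1 p.2) (fun p => hb p.1 p.2)
            fun p => 𝔼 a, v p a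
    _ = ‖((𝔼 p, ‖𝔼 a, v p a‖ ^ 2 : ℝ) : ℂ)‖ := by
        rw [Complex.norm_real, Real.norm_of_nonneg (expect_nonneg fun _ _ => by positivity)]
    _ ≤ _ := by
        rw [expand]
        exact (norm_expect_le_expect_norm _).trans
          (expect_le_expect fun a _ => norm_expect_le_expect_norm _)

lemma norm_expect_mul_isLowerRankProd_pow_le {A : Z → (Fin (s + 1) → α) → ℂ}
    {B : Z → (Fin (s + 1) → α) → ℂ} (hB : ∀ z, IsLowerRankProd (B z)) :
    ∃ B' : α → α → Z → (Fin s → α) → ℂ, (∀ a a' z, IsLowerRankProd (B' a a' z)) ∧ ∀ k ≠ 0,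
      ‖𝔼 z, 𝔼 h, A z h * B z h‖ ^ (2 * k) ≤ 𝔼 a, 𝔼 a', ‖𝔼 z, 𝔼 r,
        (A z (Fin.cons a r) * conj (A z (Fin.cons a' r))) * B' a a' z r‖ ^ k := by
  obtain ⟨B', hB', hle⟩ := sq_norm_expect_mul_isLowerRankProd_le A hB
  refine ⟨B', hB', fun k hk => ?_⟩
  rw [pow_mul]
  exact (pow_le_pow_left₀ (by positivity) hle k).trans <|
    (expect_pow_le_expect_pow (fun a => expect_nonneg fun a' _ => norm_nonneg _) hk).trans <|
      expect_le_expect fun a _ => expect_pow_le_expect_pow (fun a' => norm_nonneg _) hk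

/-- The Gowers–Cauchy–Schwarz inequality, for functions of `h₀ + ⋯ + hₛ`. -/
lemma norm_expect_sum_mul_isLowerRankProd_pow_le_gowersPow {G : Type*} [AddCommGroup G]
    [Fintype G] (f : Z → G → ℂ) {B : Z → (Fin (s + 1) → G) → ℂ}
    (hB : ∀ z, IsLowerRankProd (B z)) :
    ‖𝔼 z, 𝔼 h, f z (∑ i, h i) * B z h‖ ^ 2 ^ (s + 1) ≤ 𝔼 z, gowersPow s (f z) := by
  induction s generalizing f with
  | zero =>
    choose b B' hb hB' hBb using fun z => (hB z).exists_eq_mul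
    choose c _ hB'c using hB'
    have (z : Z) : 𝔼 h : Fin 1 → G, f z (∑ i, h i) * B z h = b z 0 * 𝔼 x, f z x := by
      rw [expect_fin_succ, mul_expect]
      refine expect_congr rfl fun a _ => ?_
      simp [Subsingleton.elim (default : Fin 0 → G) 0, hBb, hB'c, mul_comm]
    simp only [this]
    exact OneBounded.sq_norm_expect_mul_le (fun z => hb z 0) _
  | succ s ih =>
    obtain ⟨B', hB', hle⟩ :=
      norm_expect_mul_isLowerRankProd_pow_le (A := fun z h => f z (∑ i, h i)) hB
    rw [pow_succ' 2]
    refine (hle _ (by positivity)).trans ?_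
    simp only [Fin.sum_univ_succ (n := s + 1), Fin.cons_zero, Fin.cons_succ]
    calc _ ≤ 𝔼 a, 𝔼 a', 𝔼 z, gowersPow s (fun t => f z (a + t) * conj (f z (a' + t))) :=
          expect_le_expect fun a _ => expect_le_expect fun a' _ =>
            ih (fun z t => f z (a + t) * conj (f z (a' + t))) (hB' a a')
      _ = 𝔼 z, 𝔼 a, 𝔼 a', gowersPow s (fun t => f z (a + t) * conj (f z (a' + t))) := by
          rw [expect_comm (s := (univ : Finset Z))]
          exact expect_congr rfl fun a _ => expect_comm _ _ _
      _ = 𝔼 z, gowersPow (s + 1) (f z) := by simp only [expect_gowersPow_mul_conj_translate]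

end LowerRank

section AddChar

variable {R : Type*} [CommRing R] [Finite R]

lemma addChar_mul_conj (χ : AddChar R ℂ) (x y : R) : χ x * conj (χ y) = χ (x - y) := by
  rw [← AddChar.map_neg_eq_conj, ← AddChar.map_add_eq_mul, sub_eq_add_neg]

lemma mul_addChar_mul_conj (χ : AddChar R ℂ) (c c' k k' : ℂ) (a a' x : R) :
    c * (χ (a * x) * k) * conj (c' * (χ (a' * x) * k')) =
      c * conj c' * (χ ((a - a') * x) * (k * conj k')) := by
  rw [sub_mul, ← addChar_mul_conj, map_mul (starRingEnd ℂ), map_mul (starRingEnd ℂ)]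
  ring

lemma oneBounded_addChar {α : Type*} (χ : AddChar R ℂ) (f : α → R) :
    OneBounded fun x => χ (f x) := fun x => (AddChar.norm_apply χ (f x)).le

end AddChar

section Fourier

variable {R : Type*} [CommRing R] [Fintype R] {χ : AddChar R ℂ}

lemma expect_addChar_mul [DecidableEq R] (hχ : χ.IsPrimitive) (a : R) :
    𝔼 x, χ (a * x) = if a = 0 then 1 else 0 := by
  have := AddChar.sum_mulShift a hχ
  simp only [mul_comm _ a] at this
  rw [Fintype.expect_eq_sum_div_card, this]
  split_ifs <;> simp

lemma sum_sq_norm_expect_mul_addChar (hχ : χ.IsPrimitive) (f : R → ℂ) :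
    ∑ a, ‖𝔼 x, f x * χ (a * x)‖ ^ 2 = 𝔼 x, ‖f x‖ ^ 2 := by
  classical
  have orthogonality (x y : R) : 𝔼 a, f x * χ (a * x) * conj (f y * χ (a * y)) =
      if x = y then f x * conj (f y) else 0 := by
    have (a : R) : f x * χ (a * x) * conj (f y * χ (a * y)) =
        f x * conj (f y) * χ ((x - y) * a) := by
      rw [mul_comm _ a, mul_sub, ← addChar_mul_conj, map_mul (starRingEnd ℂ)]
      ring
    simp only [this, ← mul_expect, expect_addChar_mul hχ, sub_eq_zero, mul_ite, mul_one, mul_zero]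
  apply Complex.ofReal_injective
  rw [ofReal_expect, Complex.ofReal_sum]
  simp only [ofReal_sq_norm_expect]
  rw [← Fintype.card_mul_expect, expect_comm, mul_expect]
  refine expect_congr rfl fun x _ => ?_
  rw [expect_comm]
  simp only [orthogonality]
  rw [Fintype.card_mul_expect]
  simp [Complex.mul_conj, Complex.normSq_eq_norm_sq]

lemma gowersPow_one_eq_sum (hχ : χ.IsPrimitive) (f : R → ℂ) :
    gowersPow 1 f = ∑ a, (‖𝔼 x, f x * χ (a * x)‖ ^ 2) ^ 2 := by
  have fourier_coeff (a : R) : 𝔼 h, (𝔼 x, mulDiff h f x) * χ (a * h) =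
      ((‖𝔼 x, f x * χ (a * x)‖ ^ 2 : ℝ) : ℂ) := by
    rw [ofReal_sq_norm_expect_eq_shift]
    refine expect_congr rfl fun h _ => ?_
    rw [expect_mul]
    refine expect_congr rfl fun x _ => ?_
    have : χ (a * h) = χ (a * (x + h)) * conj (χ (a * x)) := by
      rw [addChar_mul_conj]
      congr 1
      ring
    rw [this, map_mul (starRingEnd ℂ), mulDiff]
    ring
  simp only [gowersPow, ← sum_sq_norm_expect_mul_addChar hχ fun h => 𝔼 x, mulDiff h f x,
    fourier_coeff, Complex.norm_real, norm_pow, norm_norm]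

/- The inverse theorem for the `U²`-norm: `∑ a, |f̂ a| ^ 4 ≤ max_a |f̂ a| ^ 2 * ∑ a, |f̂ a| ^ 2`. -/
lemma OneBounded.exists_gowersPow_one_le (hχ : χ.IsPrimitive) {f : R → ℂ} (hf : OneBounded f) :
    ∃ a, gowersPow 1 f ≤ ‖𝔼 x, f x * χ (a * x)‖ ^ 2 := by
  obtain ⟨a, -, ha⟩ := exists_max_image univ (fun a => ‖𝔼 x, f x * χ (a * x)‖ ^ 2) univ_nonempty
  refine ⟨a, ?_⟩
  calc gowersPow 1 f
      ≤ ∑ b, ‖𝔼 x, f x * χ (a * x)‖ ^ 2 * ‖𝔼 x, f x * χ (b * x)‖ ^ 2 := by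
        rw [gowersPow_one_eq_sum hχ]
        refine sum_le_sum fun b _ => ?_
        rw [sq (‖𝔼 x, f x * χ (b * x)‖ ^ 2)]
        exact mul_le_mul_of_nonneg_right (ha b (mem_univ _)) (by positivity)
    _ = ‖𝔼 x, f x * χ (a * x)‖ ^ 2 * 𝔼 x, ‖f x‖ ^ 2 := by
        rw [← mul_sum, sum_sq_norm_expect_mul_addChar hχ]
    _ ≤ ‖𝔼 x, f x * χ (a * x)‖ ^ 2 :=
        mul_le_of_le_one_right (by positivity) <|
          expect_le univ_nonempty fun x _ => pow_le_one₀ (norm_nonneg _) (hf x)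

end Fourier

lemma pow_mul_le_of_pow_le {L G v ε C₁ C₂ : ℝ} {k₁ k₂ : ℕ} (hL : 0 ≤ L) (hG : 0 ≤ G)
    (hC₁ : 0 ≤ C₁) (hε : 0 ≤ ε) (hε1 : ε ≤ 1) (hk₂ : k₂ ≠ 0) (hLG : L ^ k₁ ≤ C₁ * (G + ε))
    (hGv : G ^ k₂ ≤ C₂ * v) : L ^ (k₁ * k₂) ≤ (2 * C₁) ^ k₂ * (C₂ * v + ε) := by
  calc L ^ (k₁ * k₂) ≤ (C₁ * (G + ε)) ^ k₂ := by
        rw [pow_mul]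
        exact pow_le_pow_left₀ (by positivity) hLG _
    _ ≤ C₁ ^ k₂ * (2 ^ (k₂ - 1) * (G ^ k₂ + ε ^ k₂)) := by
        rw [mul_pow]
        gcongr
        exact add_pow_le hG hε _
    _ ≤ C₁ ^ k₂ * (2 ^ k₂ * (C₂ * v + ε)) := by
        have : ε ^ k₂ ≤ ε := pow_le_of_le_one hε hε1 hk₂
        gcongr
        · norm_num
        · exact Nat.sub_le _ _
    _ = (2 * C₁) ^ k₂ * (C₂ * v + ε) := by ring

section DegreeLowering

variable {R Y : Type*} [CommRing R] [Fintype R] [Fintype Y] {χ : AddChar R ℂ}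
  {𝒞 : Set (Y → R → ℂ)} {ε : ℝ}

/-- A class of `1`-bounded kernels that is closed under `(K, K') ↦ K * conj K'` and all of whose
members correlate to at most `ε` with every nontrivial character of the second variable.
Degree lowering applies to the averages of such kernels. -/
structure IsPseudorandomClass (χ : AddChar R ℂ) (𝒞 : Set (Y → R → ℂ)) (ε : ℝ) : Prop where
  mul_conj_mem : ∀ K ∈ 𝒞, ∀ K' ∈ 𝒞, (fun y x => K y x * conj (K' y x)) ∈ 𝒞
  oneBounded : ∀ K ∈ 𝒞, ∀ y, OneBounded (K y)
  norm_expect_le : ∀ K ∈ 𝒞, ∀ a ≠ 0, ‖𝔼 z : R × Y, χ (a * z.1) * K z.2 z.1‖ ≤ ε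

lemma IsPseudorandomClass.norm_mul_expect_le [DecidableEq R] (h𝒞 : IsPseudorandomClass χ 𝒞 ε)
    (hε : 0 ≤ ε) {K : Y → R → ℂ} (hK : K ∈ 𝒞) {c : ℂ} (hc : ‖c‖ ≤ 1) (a : R) :
    ‖c * 𝔼 z : R × Y, χ (a * z.1) * K z.2 z.1‖ ≤ (if a = 0 then ‖c‖ else 0) + ε := by
  rw [norm_mul]
  split_ifs with ha
  · have : OneBounded fun z : R × Y => χ (a * z.1) * K z.2 z.1 :=
      (oneBounded_addChar χ _).mul fun z => h𝒞.oneBounded K hK _ _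
    exact (mul_le_of_le_one_right (norm_nonneg c) this.norm_expect_le).trans
      (le_add_of_nonneg_right hε)
  · rw [zero_add]
    exact (mul_le_of_le_one_left (norm_nonneg _) hc).trans (h𝒞.norm_expect_le K hK a ha)

lemma IsPseudorandomClass.exists_isLowerRankSum [DecidableEq R] (h𝒞 : IsPseudorandomClass χ 𝒞 ε)
    (hε : 0 ≤ ε) {s : ℕ} {c : (Fin s → R) → ℂ} (hc : OneBounded c) (φ : (Fin s → R) → R)
    {K : (Fin s → R) → Y → R → ℂ} (hK : ∀ h, K h ∈ 𝒞) {B : R × Y → (Fin s → R) → ℂ}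
    (hB : ∀ z, IsLowerRankProd (B z)) :
    ∃ ψ, IsLowerRankSum ψ ∧
      ‖𝔼 z : R × Y, 𝔼 h, c h * (χ (φ h * z.1) * K h z.2 z.1) * B z h‖ ^ 2 ^ s ≤
        (𝔼 h, if φ h = ψ h then ‖c h‖ else 0) + ε := by
  induction s with
  | zero =>
    choose b _ hb using hB
    refine ⟨0, ⟨fun i => i.elim0, fun i => i.elim0, by simp⟩, ?_⟩
    simpa [hb, ← mul_expect] using
      h𝒞.norm_mul_expect_le hε (hK default) (hc default) (φ default)
  | succ s ih =>
    let A (z : R × Y) (h : Fin (s + 1) → R) : ℂ := c h * (χ (φ h * z.1) * K h z.2 z.1)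
    obtain ⟨B', hB', hle⟩ := norm_expect_mul_isLowerRankProd_pow_le (A := A) hB
    have fibre_bound (a' a : R) : ∃ ψ, IsLowerRankSum ψ ∧ ‖𝔼 z, 𝔼 r,
        A z (Fin.cons a r) * conj (A z (Fin.cons a' r)) * B' a a' z r‖ ^ 2 ^ s ≤
        (𝔼 r, if φ (Fin.cons a r) = φ (Fin.cons a' r) + ψ r then ‖c (Fin.cons a r)‖ else 0) +
          ε := by
      obtain ⟨ψ, hψ, hψle⟩ := ih (OneBounded.mul (fun r => hc (Fin.cons a r))
        (OneBounded.conj fun r => hc (Fin.cons a' r)))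
        (fun r => φ (Fin.cons a r) - φ (Fin.cons a' r))
        (fun r => h𝒞.mul_conj_mem _ (hK (Fin.cons a r)) _ (hK (Fin.cons a' r))) (hB' a a')
      refine ⟨ψ, hψ, ?_⟩
      simp only [A, mul_addChar_mul_conj]
      refine hψle.trans ?_
      gcongr with r _
      simp only [sub_eq_iff_eq_add, add_comm (ψ r)]
      split_ifs
      · rw [norm_mul]
        exact mul_le_of_le_one_right (norm_nonneg _) (hc.conj _)
      · exact le_rfl
    choose ψ hψ hψle using fibre_bound
    obtain ⟨a', ha'⟩ := exists_expect_le fun a' => 𝔼 a, ‖𝔼 z, 𝔼 r,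
      A z (Fin.cons a r) * conj (A z (Fin.cons a' r)) * B' a a' z r‖ ^ 2 ^ s
    refine ⟨fun h => φ (Fin.cons a' (Fin.tail h)) + ψ a' (h 0) (Fin.tail h),
      .cons (fun r => φ (Fin.cons a' r)) (hψ a'), ?_⟩
    rw [pow_succ' 2]
    refine (hle _ (by positivity)).trans ?_
    rw [expect_comm]
    refine (ha'.trans (expect_le_expect fun a _ => hψle a' a)).trans (le_of_eq ?_)
    rw [expect_add_distrib, Fintype.expect_const, expect_fin_succ]
    simp only [Fin.tail_cons, Fin.cons_zero]

/- Expanding the square in `h ↦ 𝔼 x, Δ_h D x * χ (ψ h * x)` turns `χ (ψ h * x)` into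
`χ (ψ h * k)`, which is a lower rank product in `h`. -/
lemma OneBounded.expect_sq_norm_expect_iterMulDiff_pow_le {s : ℕ} {ψ : (Fin (s + 1) → R) → R}
    (hψ : IsLowerRankSum ψ) {D : R → ℂ} (hD : OneBounded D) :
    (𝔼 h, ‖𝔼 x, iterMulDiff (s + 1) h D x * χ (ψ h * x)‖ ^ 2) ^ 2 ^ (s + 1) ≤
      gowersPow (s + 1) D := by
  have expand : ((𝔼 h, ‖𝔼 x, iterMulDiff (s + 1) h D x * χ (ψ h * x)‖ ^ 2 : ℝ) : ℂ) =
      𝔼 k, 𝔼 x, 𝔼 h, iterMulDiff (s + 1) h (mulDiff k D) x * χ (ψ h * k) := by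
    rw [ofReal_expect]
    simp only [ofReal_sq_norm_expect_eq_shift]
    rw [expect_comm]
    refine expect_congr rfl fun k _ => ?_
    rw [expect_comm]
    refine expect_congr rfl fun x _ => expect_congr rfl fun h _ => ?_
    have : χ (ψ h * k) = χ (ψ h * (x + k)) * conj (χ (ψ h * x)) := by
      rw [addChar_mul_conj, ← mul_sub, add_sub_cancel_left]
    rw [← mulDiff_iterMulDiff, mulDiff, this, map_mul (starRingEnd ℂ)]
    ring
  have fibre_bound (k : R) : ‖𝔼 x, 𝔼 h, iterMulDiff (s + 1) h (mulDiff k D) x * χ (ψ h * k)‖ ^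
      2 ^ (s + 1) ≤ gowersPow s (mulDiff k D) := by
    obtain ⟨B, hB, hDB⟩ := (hD.mulDiff k).exists_iterMulDiff_eq_mul (s := s + 1)
    have := norm_expect_sum_mul_isLowerRankProd_pow_le_gowersPow
      (fun x t => mulDiff k D (t + x)) (B := fun x h => B x h * χ (ψ h * k))
      fun x => (hB x).mul (hψ.isLowerRankProd_addChar χ k)
    simp only [gowersPow_translate, Fintype.expect_const] at this
    simpa only [hDB, mul_assoc, add_comm] using this
  calc _ = ‖((𝔼 h, ‖𝔼 x, iterMulDiff (s + 1) h D x * χ (ψ h * x)‖ ^ 2 : ℝ) : ℂ)‖ ^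
        2 ^ (s + 1) := by
        rw [Complex.norm_real, Real.norm_of_nonneg (expect_nonneg fun _ _ => by positivity)]
    _ ≤ _ := by
        rw [expand]
        exact norm_expect_pow_le _ (by positivity)
    _ ≤ _ := expect_le_expect fun k _ => fibre_bound k

lemma IsPseudorandomClass.oneBounded_of_expect (h𝒞 : IsPseudorandomClass χ 𝒞 ε)
    {K : Y → R → ℂ} (hK : ∀ t, (fun y x => K y (x + t)) ∈ 𝒞) {D : R → ℂ}
    (hD : ∀ x, D x = 𝔼 y, K y x) : OneBounded D := fun x => by
  rw [hD]
  exact OneBounded.norm_expect_le fun y => by simpa using h𝒞.oneBounded _ (hK x) y 0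

lemma IsPseudorandomClass.expect_sq_norm_pow_le [DecidableEq R]
    (h𝒞 : IsPseudorandomClass χ 𝒞 ε) (hε : 0 ≤ ε) {K : Y → R → ℂ}
    (hK : ∀ t, (fun y x => K y (x + t)) ∈ 𝒞) {D : R → ℂ} (hD : ∀ x, D x = 𝔼 y, K y x) {s : ℕ}
    {φ : (Fin s → R) → R} {I : (Fin s → R) → ℂ}
    (hI : ∀ h, I h = 𝔼 x, iterMulDiff s h D x * χ (φ h * x)) :
    ∃ ψ, IsLowerRankSum ψ ∧
      (𝔼 h, ‖I h‖ ^ 2) ^ 2 ^ s ≤ (𝔼 h, if φ h = ψ h then ‖I h‖ else 0) + ε := by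
  have hD1 := h𝒞.oneBounded_of_expect hK hD
  have hI1 : OneBounded I := fun h => by
    rw [hI]
    exact ((hD1.iterMulDiff h).mul (oneBounded_addChar χ _)).norm_expect_le
  obtain ⟨B, hB, hDB⟩ := hD1.exists_iterMulDiff_eq_mul (s := s)
  have expand : ((𝔼 h, ‖I h‖ ^ 2 : ℝ) : ℂ) = 𝔼 z : R × Y, 𝔼 h,
      conj (I h) * (χ (φ h * z.1) * K z.2 (z.1 + ∑ i, h i)) * B z.1 h := by
    rw [ofReal_expect, expect_comm]
    refine expect_congr rfl fun h _ => ?_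
    rw [expect_prod_type fun x y => conj (I h) * (χ (φ h * x) * K y (x + ∑ i, h i)) * B x h]
    calc ((‖I h‖ ^ 2 : ℝ) : ℂ) = conj (I h) * 𝔼 x, iterMulDiff s h D x * χ (φ h * x) := by
          rw [← hI, mul_comm, Complex.mul_conj, Complex.normSq_eq_norm_sq]
      _ = _ := by
          simp only [hDB, hD, mul_expect, expect_mul]
          exact expect_congr rfl fun x _ => expect_congr rfl fun y _ => by ring
  obtain ⟨ψ, hψ, hle⟩ := h𝒞.exists_isLowerRankSum hε hI1.conj φ
    (K := fun h y x => K y (x + ∑ i, h i)) (fun h => hK _) (fun z => hB z.1)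
  refine ⟨ψ, hψ, ?_⟩
  rw [← expand, Complex.norm_real, Real.norm_of_nonneg (expect_nonneg fun _ _ => by positivity)]
    at hle
  simpa only [RCLike.norm_conj] using hle

lemma IsPseudorandomClass.gowersPow_succ_succ_pow_le (hχ : χ.IsPrimitive)
    (h𝒞 : IsPseudorandomClass χ 𝒞 ε) (hε : 0 ≤ ε) {K : Y → R → ℂ}
    (hK : ∀ t, (fun y x => K y (x + t)) ∈ 𝒞) {D : R → ℂ} (hD : ∀ x, D x = 𝔼 y, K y x) (s : ℕ) :
    ∃ G, 0 ≤ G ∧ gowersPow (s + 2) D ^ 2 ^ (s + 1) ≤ G + ε ∧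
      G ^ 2 ^ (s + 2) ≤ gowersPow (s + 1) D := by
  classical
  have hD1 := h𝒞.oneBounded_of_expect hK hD
  choose φ hφ using fun h : Fin (s + 1) → R => (hD1.iterMulDiff h).exists_gowersPow_one_le hχ
  set I : (Fin (s + 1) → R) → ℂ := fun h => 𝔼 x, iterMulDiff (s + 1) h D x * χ (φ h * x) with hI
  obtain ⟨ψ, hψ, hle⟩ := h𝒞.expect_sq_norm_pow_le hε hK hD (I := I) fun _ => rfl
  set G : ℝ := 𝔼 h, if φ h = ψ h then ‖I h‖ else 0
  have hG : G ^ 2 ≤ 𝔼 h, ‖𝔼 x, iterMulDiff (s + 1) h D x * χ (ψ h * x)‖ ^ 2 := by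
    refine (expect_pow_le_expect_pow (fun h => by positivity) two_ne_zero).trans
      (expect_le_expect fun h _ => ?_)
    split_ifs with hh
    · simp only [hI, hh, le_refl]
    · rw [zero_pow two_ne_zero]
      positivity
  refine ⟨G, expect_nonneg fun h _ => by positivity, ?_, ?_⟩
  · refine (pow_le_pow_left₀ (gowersPow_nonneg _ _) ?_ _).trans hle
    rw [show s + 2 = 1 + (s + 1) by ring, gowersPow_add]
    exact expect_le_expect fun h _ => hφ h
  · rw [pow_succ' 2 (s + 1), pow_mul]
    exact (pow_le_pow_left₀ (sq_nonneg G) hG _).trans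
      (OneBounded.expect_sq_norm_expect_iterMulDiff_pow_le hψ hD1)

end DegreeLowering

lemma exists_gowersPow_pow_le (s : ℕ) : ∃ (k : ℕ) (C : ℝ), k ≠ 0 ∧ 0 ≤ C ∧
    ∀ {R Y : Type u} [CommRing R] [Fintype R] [Fintype Y] {χ : AddChar R ℂ}
      {𝒞 : Set (Y → R → ℂ)} {ε : ℝ} (_ : χ.IsPrimitive) (_ : IsPseudorandomClass χ 𝒞 ε)
      (_ : 0 ≤ ε) (_ : ε ≤ 1) {K : Y → R → ℂ} (_ : ∀ t, (fun y x => K y (x + t)) ∈ 𝒞)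
      {D : R → ℂ} (_ : ∀ x, D x = 𝔼 y, K y x),
      gowersPow (s + 1) D ^ k ≤ C * (gowersPow 1 D + ε) := by
  induction s with
  | zero => exact ⟨1, 1, one_ne_zero, zero_le_one, by intros; simp_all⟩
  | succ s ih =>
    obtain ⟨k, C, hk, hC, hs⟩ := ih
    refine ⟨2 ^ (s + 1) * (2 ^ (s + 2) * k), (2 * 1) ^ (2 ^ (s + 2) * k) * (C + 1 + 1),
      by positivity, by positivity, ?_⟩
    intro R Y _ _ _ χ 𝒞 ε hχ h𝒞 hε hε1 K hK D hD
    obtain ⟨G, hG0, hDG, hGD⟩ := h𝒞.gowersPow_succ_succ_pow_le hχ hε hK hD s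
    have hG : G ^ (2 ^ (s + 2) * k) ≤ C * (gowersPow 1 D + ε) := by
      rw [pow_mul]
      exact (pow_le_pow_left₀ (by positivity) hGD k).trans (hs hχ h𝒞 hε hε1 hK hD)
    refine (pow_mul_le_of_pow_le (gowersPow_nonneg _ _) hG0 zero_le_one hε hε1 (by positivity)
      (by rwa [one_mul]) hG).trans ?_
    have := gowersPow_nonneg 1 D
    rw [mul_assoc]
    gcongr
    linarith

section Taylor

variable {F : Type*} [CommRing F] {d : ℕ} {P : F[X]}

lemma natCast_ne_zero_of_lt_ringChar {k : ℕ} (hk : k ≠ 0) (hkF : k < ringChar F) :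
    (k : F) ≠ 0 :=
  (ringChar.spec F k).not.mpr (Nat.not_dvd_of_pos_of_lt (Nat.pos_of_ne_zero hk) hkF)

lemma coeff_taylor_of_natDegree_le (hP : P.natDegree ≤ d) (h : F) :
    (taylor h P).coeff d = P.coeff d := by
  rw [taylor_coeff, eval_eq_sum_range' (n := 1)]
  · simp [hasseDeriv_coeff]
  · have := natDegree_hasseDeriv_le P d
    omega

lemma coeff_taylor_of_natDegree_le_succ (hP : P.natDegree ≤ d + 1) (h : F) :
    (taylor h P).coeff d = P.coeff d + (d + 1 : ℕ) * h * P.coeff (d + 1) := by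
  rw [taylor_coeff, eval_eq_sum_range' (n := 2)]
  · simp only [hasseDeriv_coeff, sum_range_succ, range_zero, sum_empty, zero_add, Nat.choose_self,
      Nat.cast_one, one_mul, pow_zero, mul_one, add_comm 1 d, Nat.choose_succ_self_right, pow_one]
    ring
  · have := natDegree_hasseDeriv_le P d
    omega

lemma natDegree_taylor_sub_self [IsDomain F] (hd : ((d + 1 : ℕ) : F) ≠ 0)
    (hP : P.natDegree = d + 1) {h : F} (hh : h ≠ 0) : (taylor h P - P).natDegree = d := by
  refine natDegree_eq_of_le_of_coeff_ne_zero (natDegree_le_pred (n := d + 1)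
    ((natDegree_sub_le _ _).trans (by simp [natDegree_taylor, hP])) ?_) ?_
  · rw [coeff_sub, coeff_taylor_of_natDegree_le hP.le, sub_self]
  · rw [coeff_sub, coeff_taylor_of_natDegree_le_succ hP.le, add_sub_cancel_left, ← hP]
    exact mul_ne_zero (mul_ne_zero (hP ▸ hd) hh) <|
      leadingCoeff_ne_zero.mpr (ne_zero_of_natDegree_gt (n := 0) (by omega))

end Taylor

section Weyl

variable {F : Type*} [Fintype F]

lemma expect_le_add_card_div {f : F → ℝ} (hf : ∀ h, f h ≤ 1) (B : Finset F) {c : ℝ} (hc : 0 ≤ c)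
    (hfc : ∀ h ∉ B, f h ≤ c) : 𝔼 h, f h ≤ c + #B / Fintype.card F := by
  classical
  rcases isEmpty_or_nonempty F with hF | hF
  · simpa using hc
  calc 𝔼 h, f h ≤ 𝔼 h, (c + if h ∈ B then 1 else 0) := by
        refine expect_le_expect fun h _ => ?_
        split_ifs with hB
        · linarith [hf h]
        · linarith [hfc h hB]
    _ = c + #B / Fintype.card F := by
        rw [expect_add_distrib, Fintype.expect_const, Fintype.expect_eq_sum_div_card]
        simp

lemma sq_norm_expect_addChar_le [CommRing F] (χ : AddChar F ℂ) (Q : F[X]) :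
    ‖𝔼 y, χ (Q.eval y)‖ ^ 2 ≤ 𝔼 h, ‖𝔼 y, χ ((taylor h Q - Q).eval y)‖ := by
  calc ‖𝔼 y, χ (Q.eval y)‖ ^ 2 = ‖((‖𝔼 y, χ (Q.eval y)‖ ^ 2 : ℝ) : ℂ)‖ := by simp
    _ = ‖𝔼 h, 𝔼 y, χ ((taylor h Q - Q).eval y)‖ := by
        rw [ofReal_sq_norm_expect_eq_shift]
        simp only [addChar_mul_conj, eval_sub, taylor_eval]
    _ ≤ _ := norm_expect_le_expect_norm _

end Weyl

lemma exists_norm_expect_addChar_pow_le (d : ℕ) : ∃ (k : ℕ) (C : ℝ), k ≠ 0 ∧ 0 ≤ C ∧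
    ∀ {F : Type u} [Field F] [Fintype F] {χ : AddChar F ℂ} (_ : χ.IsPrimitive)
      (_ : d + 1 < ringChar F) {Q : F[X]} (_ : Q.natDegree = d + 1),
      ‖𝔼 y, χ (Q.eval y)‖ ^ k ≤ C / Fintype.card F := by
  classical
  induction d with
  | zero =>
    refine ⟨1, 0, one_ne_zero, le_rfl, fun {F} _ _ χ hχ _ Q hQ => ?_⟩
    obtain ⟨a, ha, b, rfl⟩ := natDegree_eq_one.mp hQ
    have : 𝔼 y, χ ((C a * X + C b).eval y) = 0 := by
      simp only [eval_add, eval_mul, eval_C, eval_X, AddChar.map_add_eq_mul]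
      rw [← expect_mul, expect_addChar_mul hχ, if_neg ha, zero_mul]
    rw [this]
    simp
  | succ d ih =>
    obtain ⟨k, C, hk, hC, weyl⟩ := ih
    refine ⟨2 * k, C + 1, by omega, by positivity, fun {F} _ _ χ hχ hd Q hQ => ?_⟩
    have hd' := natCast_ne_zero_of_lt_ringChar (d + 1).succ_ne_zero hd
    calc ‖𝔼 y, χ (Q.eval y)‖ ^ (2 * k) ≤ 𝔼 h, ‖𝔼 y, χ ((taylor h Q - Q).eval y)‖ ^ k := by
          rw [pow_mul]
          exact (pow_le_pow_left₀ (by positivity) (sq_norm_expect_addChar_le χ Q) k).trans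
            (expect_pow_le_expect_pow (fun _ => norm_nonneg _) hk)
      _ ≤ C / Fintype.card F + #({0} : Finset F) / Fintype.card F :=
          expect_le_add_card_div
            (fun h => pow_le_one₀ (norm_nonneg _) (oneBounded_addChar χ _).norm_expect_le) {0}
            (by positivity) fun h hh =>
              weyl hχ (by omega) (natDegree_taylor_sub_self hd' hQ (by simpa using hh))
      _ = (C + 1) / Fintype.card F := by simp [add_div]

section VanDerCorput

lemma gowersPow_sq_le {G : Type*} [AddCommGroup G] [Fintype G] (s : ℕ) (f : G → ℂ) :
    gowersPow s f ^ 2 ≤ gowersPow (s + 1) f := by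
  induction s generalizing f with
  | zero =>
    calc gowersPow 0 f ^ 2 = ‖((‖𝔼 x, f x‖ ^ 2 : ℝ) : ℂ)‖ ^ 2 := by simp [gowersPow]
      _ ≤ gowersPow 1 f := by
        rw [ofReal_sq_norm_expect_eq_shift]
        exact norm_expect_pow_le _ two_ne_zero
  | succ s ih =>
    exact (expect_pow_le_expect_pow (fun h => gowersPow_nonneg _ _) two_ne_zero).trans
      (expect_le_expect fun h _ => ih _)

lemma gowersPow_pow_le_gowersPow_add {G : Type*} [AddCommGroup G] [Fintype G] (s t : ℕ)
    (f : G → ℂ) : gowersPow s f ^ 2 ^ t ≤ gowersPow (s + t) f := by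
  induction t with
  | zero => simp
  | succ t ih =>
    rw [pow_succ 2 t, pow_mul]
    exact (pow_le_pow_left₀ (pow_nonneg (gowersPow_nonneg _ _) _) ih 2).trans
      (gowersPow_sq_le _ _)

lemma sq_norm_expect_mul_expect_le {G : Type*} [AddCommGroup G] [Fintype G] {u : G → ℂ}
    (hu : OneBounded u) (v : G → G → ℂ) (S : G → G) :
    ‖𝔼 x, u x * 𝔼 y, v x y‖ ^ 2 ≤
      𝔼 h, ‖𝔼 x, 𝔼 y, v (x - S y) (y + h) * conj (v (x - S y) y)‖ := by
  have expand : ((𝔼 x, ‖𝔼 y, v x y‖ ^ 2 : ℝ) : ℂ) =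
      𝔼 h, 𝔼 x, 𝔼 y, v (x - S y) (y + h) * conj (v (x - S y) y) := by
    rw [ofReal_expect]
    simp only [ofReal_sq_norm_expect_eq_shift]
    rw [expect_comm]
    refine expect_congr rfl fun h _ => ?_
    rw [expect_comm, expect_comm (f := fun x y => v (x - S y) (y + h) * conj (v (x - S y) y))]
    refine expect_congr rfl fun y _ => ?_
    simp only [sub_eq_add_neg]
    exact (expect_add_right (-S y) fun x => v x (y + h) * conj (v x y)).symm
  calc ‖𝔼 x, u x * 𝔼 y, v x y‖ ^ 2 ≤ 𝔼 x, ‖𝔼 y, v x y‖ ^ 2 := hu.sq_norm_expect_mul_le _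
    _ = ‖((𝔼 x, ‖𝔼 y, v x y‖ ^ 2 : ℝ) : ℂ)‖ := by
        rw [Complex.norm_real, Real.norm_of_nonneg (expect_nonneg fun _ _ => by positivity)]
    _ ≤ _ := by
        rw [expand]
        exact norm_expect_le_expect_norm _

end VanDerCorput

section Linear

variable {F : Type*} [Field F] [Fintype F]

lemma norm_expect_mul_prod_linear_pow_le {n : ℕ} (φ : F → ℂ) (a : F) {f : Fin n → F → ℂ}
    (hf : ∀ i, OneBounded (f i)) {b : Fin n → F} (hb : ∀ i, b i ≠ a) :
    ‖𝔼 x, 𝔼 y, φ (x + a * y) * ∏ i, f i (x + b i * y)‖ ^ 2 ^ (n + 1) ≤ gowersPow n φ := by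
  induction n generalizing φ a with
  | zero =>
    rw [expect_comm]
    simp only [univ_eq_empty, prod_empty, mul_one, expect_add_right _ φ, Fintype.expect_const]
    simp [gowersPow]
  | succ n ih =>
    let v (x y : F) : ℂ := φ (x + (a - b 0) * y) * ∏ i : Fin n, f i.succ (x + (b i.succ - b 0) * y)
    have shift : 𝔼 x, 𝔼 y, φ (x + a * y) * ∏ i, f i (x + b i * y) = 𝔼 x, f 0 x * 𝔼 y, v x y := by
      simp only [mul_expect]
      rw [expect_comm, expect_comm (f := fun x y => f 0 x * v x y)]
      refine expect_congr rfl fun y _ => ?_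
      rw [← expect_add_right (b 0 * y) fun x => f 0 x * v x y]
      refine expect_congr rfl fun x _ => ?_
      simp only [v, Fin.prod_univ_succ, sub_mul, add_add_sub_cancel]
      exact mul_left_comm _ _ _
    have fibre_bound (h : F) : ‖𝔼 x, 𝔼 y, v (x - 0) (y + h) * conj (v (x - 0) y)‖ ^ 2 ^ (n + 1) ≤
        gowersPow n (mulDiff ((a - b 0) * h) φ) := by
      have := ih (mulDiff ((a - b 0) * h) φ) (a - b 0)
        (fun i => (hf i.succ).mulDiff ((b i.succ - b 0) * h)) (b := fun i => b i.succ - b 0)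
        fun i hi => hb i.succ (sub_left_injective hi)
      refine (le_of_eq ?_).trans this
      congr 2
      refine expect_congr rfl fun x _ => expect_congr rfl fun y _ => ?_
      simp only [v, sub_zero, mulDiff, mul_add, ← add_assoc, map_mul, map_prod, prod_mul_distrib]
      exact mul_mul_mul_comm _ _ _ _
    calc _ ≤ 𝔼 h, ‖𝔼 x, 𝔼 y, v (x - 0) (y + h) * conj (v (x - 0) y)‖ ^ 2 ^ (n + 1) := by
          rw [shift, pow_succ' 2 (n + 1), pow_mul]
          exact (pow_le_pow_left₀ (by positivity)
            (sq_norm_expect_mul_expect_le (hf 0) v fun _ => 0) _).trans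
            (expect_pow_le_expect_pow (fun _ => norm_nonneg _) (by positivity))
      _ ≤ 𝔼 h, gowersPow n (mulDiff ((a - b 0) * h) φ) := expect_le_expect fun h _ => fibre_bound h
      _ = gowersPow (n + 1) φ :=
          Fintype.expect_equiv (Equiv.mulLeft₀ _ (sub_ne_zero.mpr (hb 0).symm)) _ _ fun _ => rfl

end Linear

section VdcSystem

variable {F : Type*} [CommRing F] {ι : Type*}

/-- The functions that take part in the count after a van der Corput step: a function attached to a
polynomial of positive degree occurs twice, the others are absorbed. -/
noncomputable def vdcFun (φ : F → ℂ) (f : ι → F → ℂ) (P : ι → F[X]) :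
    Option ({i // (P i).natDegree ≠ 0} ⊕ {i // (P i).natDegree ≠ 0}) → F → ℂ
  | none => fun x => conj (φ x)
  | some (.inl i) => f i
  | some (.inr i) => fun x => conj (f i x)

/-- The polynomials that go with `vdcFun` when the van der Corput step, with differencing parameter
`h`, is followed by the substitution `x ↦ x - S y`. -/
noncomputable def vdcPoly (h : F) (S R : F[X]) (P : ι → F[X]) :
    Option ({i // (P i).natDegree ≠ 0} ⊕ {i // (P i).natDegree ≠ 0}) → F[X]
  | none => R - S
  | some (.inl i) => taylor h (P i) - S
  | some (.inr i) => P i - S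

lemma card_vdc_le [Fintype ι] (P : ι → F[X]) {n : ℕ} (hn : Fintype.card ι ≤ n) :
    Fintype.card (Option ({i // (P i).natDegree ≠ 0} ⊕ {i // (P i).natDegree ≠ 0})) ≤
      2 * n + 1 := by
  have := Fintype.card_subtype_le fun i => (P i).natDegree ≠ 0
  simp only [Fintype.card_option, Fintype.card_sum]
  omega

lemma oneBounded_vdcFun {φ : F → ℂ} (hφ : OneBounded φ) {f : ι → F → ℂ}
    (hf : ∀ i, OneBounded (f i)) (P : ι → F[X]) : ∀ j, OneBounded (vdcFun φ f P j)
  | none => hφ.conj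
  | some (.inl i) => hf i
  | some (.inr i) => (hf i).conj

end VdcSystem

section PolyCount

variable {F : Type*} [Field F] [Fintype F] {ι : Type*} [Fintype ι]

/-- The average over all `x, y` of `φ (x + R y) ∏ᵢ f i (x + P i y)`. -/
noncomputable def polyCount (φ : F → ℂ) (R : F[X]) (f : ι → F → ℂ) (P : ι → F[X]) : ℂ :=
  𝔼 x, 𝔼 y, φ (x + R.eval y) * ∏ i, f i (x + (P i).eval y)

lemma norm_polyCount_le_one {φ : F → ℂ} (hφ : OneBounded φ) (R : F[X]) {f : ι → F → ℂ}
    (hf : ∀ i, OneBounded (f i)) (P : ι → F[X]) : ‖polyCount φ R f P‖ ≤ 1 :=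
  OneBounded.norm_expect_le fun _ => OneBounded.norm_expect_le <|
    OneBounded.mul (fun _ => hφ _) (OneBounded.prod fun i _ => hf i _)

lemma polyCount_add_right (φ : F → ℂ) (R T : F[X]) (f : ι → F → ℂ) (P : ι → F[X]) :
    polyCount φ (R + T) f (fun i => P i + T) = polyCount φ R f P := by
  rw [polyCount, polyCount, expect_comm,
    expect_comm (f := fun x y => φ (x + R.eval y) * ∏ i, f i (x + (P i).eval y))]
  refine expect_congr rfl fun y _ => ?_
  rw [← expect_add_right (T.eval y) fun x => φ (x + R.eval y) * ∏ i, f i (x + (P i).eval y)]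
  simp only [eval_add, add_assoc, add_comm (T.eval y)]

lemma polyCount_comp_equiv {κ : Type*} [Fintype κ] (e : κ ≃ ι) (φ : F → ℂ) (R : F[X])
    (f : ι → F → ℂ) (P : ι → F[X]) :
    polyCount φ R (fun i => f (e i)) (fun i => P (e i)) = polyCount φ R f P :=
  expect_congr rfl fun x _ => expect_congr rfl fun y _ =>
    congrArg _ (e.prod_comp fun i => f i (x + (P i).eval y))

lemma sq_norm_polyCount_le (φ : F → ℂ) (R : F[X]) {f : ι → F → ℂ} (hf : ∀ i, OneBounded (f i))
    (P : ι → F[X]) (S : F[X]) :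
    ‖polyCount φ R f P‖ ^ 2 ≤
      𝔼 h, ‖polyCount φ (taylor h R - S) (vdcFun φ f P) (vdcPoly h S R P)‖ := by
  have separate : polyCount φ R f P =
      𝔼 x, (∏ i : {i // ¬ (P i).natDegree ≠ 0}, f i (x + (P i).eval 0)) *
        𝔼 y, φ (x + R.eval y) * ∏ i : {i // (P i).natDegree ≠ 0}, f i (x + (P i).eval y) := by
    refine expect_congr rfl fun x _ => ?_
    rw [mul_expect]
    refine expect_congr rfl fun y _ => ?_
    rw [mul_left_comm,
      ← Fintype.prod_subtype_mul_prod_subtype (fun i => (P i).natDegree ≠ 0), mul_comm (∏ i, _)]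
    congr 2
    refine prod_congr rfl fun i _ => ?_
    rw [eq_C_of_natDegree_eq_zero (not_not.mp i.2), eval_C, eval_C]
  rw [separate]
  refine (sq_norm_expect_mul_expect_le (OneBounded.prod fun i _ => hf _ _) _
    fun y => S.eval y).trans_eq ?_
  have sub_add_swap (a b c : F) : a - b + c = a + (c - b) := by ring
  refine expect_congr rfl fun h _ => congrArg norm ?_
  refine expect_congr rfl fun x _ => expect_congr rfl fun y _ => ?_
  rw [Fintype.prod_option, Fintype.prod_sum_type]
  simp only [vdcFun, vdcPoly, eval_sub, taylor_eval, map_mul, map_prod, sub_add_swap]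
  ring

end PolyCount

section PETSystem

variable {F : Type*} [CommRing F] {ι : Type*}

/-- The leading coefficients of the degree `j` members of `P` whose coefficient at `R.natDegree`
differs from that of `R`. The cardinalities of these sets are the weights in the PET induction. -/
def leadingCoeffs (R : F[X]) (P : ι → F[X]) (j : ℕ) : Set F :=
  (fun i => (P i).leadingCoeff) ''
    {i | (P i).natDegree = j ∧ (P i).coeff R.natDegree ≠ R.leadingCoeff}

/-- A system of polynomials of degree at most `d`, with a distinguished `R` of degree `d` that is
not a translate of any other member, whose number of leading coefficients in degree `j + 1` is at
most `W j`. -/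
structure IsPETSystem (d : ℕ) (W : Fin d → ℕ) (R : F[X]) (P : ι → F[X]) : Prop where
  natDegree_eq : R.natDegree = d
  natDegree_le : ∀ i, (P i).natDegree ≤ d
  natDegree_sub_ne_zero : ∀ i, (R - P i).natDegree ≠ 0
  ncard_leadingCoeffs_le : ∀ j : Fin d, (leadingCoeffs R P (j + 1)).ncard ≤ W j

variable {d : ℕ} {R S : F[X]} {P : ι → F[X]} {h : F}

lemma natDegree_vdcPoly_le (hR : R.natDegree ≤ d) (hP : ∀ i, (P i).natDegree ≤ d)
    (hS : S.natDegree ≤ d) : ∀ j, (vdcPoly h S R P j).natDegree ≤ d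
  | none => (natDegree_sub_le _ _).trans (max_le hR hS)
  | some (.inl i) =>
    (natDegree_sub_le _ _).trans (max_le ((natDegree_taylor _ _).trans_le (hP i)) hS)
  | some (.inr i) => (natDegree_sub_le _ _).trans (max_le (hP i) hS)

lemma exists_eq_sub_of_mem_leadingCoeffs_vdcPoly (hR : R.natDegree = d)
    (hP : ∀ i, (P i).natDegree ≤ d) (hRS : (taylor h R - S).natDegree = d) {j : ℕ} {a : F}
    (ha : a ∈ leadingCoeffs (taylor h R - S) (vdcPoly h S R P) j) :
    ∃ i Q, (P i).natDegree ≠ 0 ∧ (P i).leadingCoeff ∈ leadingCoeffs R P (P i).natDegree ∧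
      Q.natDegree = (P i).natDegree ∧ Q.leadingCoeff = (P i).leadingCoeff ∧
      (Q - S).natDegree = j ∧ (Q - S).leadingCoeff = a := by
  obtain ⟨k, ⟨hkj, hkR⟩, rfl⟩ := ha
  simp only [leadingCoeff, hRS, coeff_sub, coeff_taylor_of_natDegree_le hR.le] at hkR
  have mem {i : ι} (hi : (P i).coeff d ≠ R.coeff d) :
      (P i).leadingCoeff ∈ leadingCoeffs R P (P i).natDegree :=
    ⟨i, ⟨rfl, by rwa [leadingCoeff, hR]⟩, rfl⟩
  rcases k with _ | (i | i)
  · exact absurd (coeff_sub _ _ _) hkR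
  · refine ⟨i, taylor h (P i), i.2, mem fun hi => hkR ?_, natDegree_taylor _ _,
      leadingCoeff_taylor _ _, hkj, rfl⟩
    rw [vdcPoly, coeff_sub, coeff_taylor_of_natDegree_le (hP i), hi]
  · refine ⟨i, P i, i.2, mem fun hi => hkR ?_, rfl, rfl, hkj, rfl⟩
    rw [vdcPoly, coeff_sub, hi]

lemma leadingCoeffs_vdcPoly_subset (hR : R.natDegree = d) (hP : ∀ i, (P i).natDegree ≤ d)
    (hRS : (taylor h R - S).natDegree = d) {j : ℕ} (hj : S.natDegree < j) :
    leadingCoeffs (taylor h R - S) (vdcPoly h S R P) j ⊆ leadingCoeffs R P j := by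
  intro a ha
  obtain ⟨i, Q, -, hi, hQ, hQi, rfl, rfl⟩ := exists_eq_sub_of_mem_leadingCoeffs_vdcPoly hR hP hRS ha
  have hSQ : S.natDegree < Q.natDegree := by
    have := natDegree_sub_le Q S
    omega
  rwa [natDegree_sub_eq_left_of_natDegree_lt hSQ, leadingCoeff,
    natDegree_sub_eq_left_of_natDegree_lt hSQ, coeff_sub, coeff_eq_zero_of_natDegree_lt hSQ,
    sub_zero, coeff_natDegree, hQi, hQ]

/- The leading coefficient of `S` disappears, since it cancels when `S` is subtracted. -/
lemma leadingCoeffs_vdcPoly_natDegree_subset (hR : R.natDegree = d)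
    (hP : ∀ i, (P i).natDegree ≤ d) (hRS : (taylor h R - S).natDegree = d)
    (hS : S.natDegree ≠ 0) (hlow : ∀ j ≠ 0, j < S.natDegree → leadingCoeffs R P j = ∅) :
    leadingCoeffs (taylor h R - S) (vdcPoly h S R P) S.natDegree ⊆
      (· - S.leadingCoeff) '' (leadingCoeffs R P S.natDegree \ {S.leadingCoeff}) := by
  intro a ha
  obtain ⟨i, Q, hi0, hi, hQ, hQi, hQS, rfl⟩ :=
    exists_eq_sub_of_mem_leadingCoeffs_vdcPoly hR hP hRS ha
  have hdeg : Q.natDegree = S.natDegree := by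
    refine le_antisymm (le_of_not_gt fun hlt => ?_) (le_of_not_gt fun hlt => ?_)
    · rw [natDegree_sub_eq_left_of_natDegree_lt hlt] at hQS
      exact hlt.ne' hQS
    · rw [hlow _ hi0 (hQ ▸ hlt)] at hi
      exact hi
  have hlc : (Q - S).leadingCoeff = Q.leadingCoeff - S.leadingCoeff := by
    rw [leadingCoeff, hQS, coeff_sub, leadingCoeff, leadingCoeff, hdeg]
  rw [hlc, hQi]
  refine Set.mem_image_of_mem _ ⟨hdeg ▸ hQ ▸ hi, fun heq => hS ?_⟩
  rw [hQi, heq, sub_self, leadingCoeff_eq_zero] at hlc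
  rw [← hQS, hlc, natDegree_zero]

lemma ncard_leadingCoeffs_le_card [Fintype ι] (R : F[X]) (P : ι → F[X]) (j : ℕ) :
    (leadingCoeffs R P j).ncard ≤ Fintype.card ι :=
  (Set.ncard_image_le (Set.toFinite _)).trans <|
    (Set.ncard_le_ncard (Set.subset_univ _) (Set.toFinite _)).trans_eq (by simp)

end PETSystem

section PETSystem

variable {F : Type*} [CommRing F] [Finite F] {ι : Type*} {d : ℕ} {W : Fin d → ℕ} {R : F[X]}
  {P : ι → F[X]} {h : F}

lemma IsPETSystem.leadingCoeffs_eq_empty (hRP : IsPETSystem d W R P) {e : ℕ} (hed : e ≤ d)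
    (he : ∀ j : Fin d, j < e → W j = 0) {j : ℕ} (hj0 : j ≠ 0) (hj : j ≤ e) :
    leadingCoeffs R P j = ∅ := by
  obtain ⟨i, rfl⟩ := Nat.exists_eq_add_one_of_ne_zero hj0
  have := hRP.ncard_leadingCoeffs_le ⟨i, by omega⟩
  rw [he ⟨i, by omega⟩ hj, Nat.le_zero] at this
  exact (Set.ncard_eq_zero (Set.toFinite _)).mp this

/-- The weights after a van der Corput step applied to a system of at most `n` polynomials, at a
member of degree `e + 1`, the minimal degree of positive weight. -/
def reduceWeight (n : ℕ) (W : Fin d → ℕ) (e j : Fin d) : ℕ :=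
  if j < e then 2 * n + 1 else if j = e then W e - 1 else W j

lemma IsPETSystem.vdc [Fintype ι] {n : ℕ} (hn : Fintype.card ι ≤ n) (hRP : IsPETSystem d W R P)
    {e : Fin d} (he : ∀ j < e, W j = 0) {i : ι} (hi : (P i).natDegree = e + 1)
    (hiR : (P i).coeff d ≠ R.coeff d)
    (hh : ∀ j, (taylor h R - P i - vdcPoly h (P i) R P j).natDegree ≠ 0) :
    IsPETSystem d (reduceWeight n W e) (taylor h R - P i) (vdcPoly h (P i) R P) := by
  have hdeg : (taylor h R - P i).natDegree = d := by
    refine natDegree_eq_of_le_of_coeff_ne_zero ((natDegree_sub_le _ _).trans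
      (max_le ((natDegree_taylor _ _).trans_le hRP.natDegree_eq.le) (hRP.natDegree_le i))) ?_
    rw [coeff_sub, coeff_taylor_of_natDegree_le hRP.natDegree_eq.le]
    exact sub_ne_zero.mpr hiR.symm
  refine ⟨hdeg, natDegree_vdcPoly_le hRP.natDegree_eq.le hRP.natDegree_le (hRP.natDegree_le i), hh,
    fun j => ?_⟩
  rw [reduceWeight]
  split_ifs with hje hje
  · exact (ncard_leadingCoeffs_le_card _ _ _).trans (card_vdc_le P hn)
  · have mem : (P i).leadingCoeff ∈ leadingCoeffs R P (P i).natDegree :=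
      ⟨i, ⟨rfl, by rwa [leadingCoeff, hRP.natDegree_eq]⟩, rfl⟩
    have hsub := leadingCoeffs_vdcPoly_natDegree_subset hRP.natDegree_eq hRP.natDegree_le hdeg
      (hi ▸ (e : ℕ).succ_ne_zero) fun j hj0 hj =>
        hRP.leadingCoeffs_eq_empty e.2.le he hj0 (by omega)
    rw [hje, ← hi]
    refine (Set.ncard_le_ncard hsub (Set.toFinite _)).trans
      ((Set.ncard_image_le (Set.toFinite _)).trans ?_)
    rw [Set.ncard_sdiff_singleton_of_mem mem, hi]
    exact Nat.sub_le_sub_right (hRP.ncard_leadingCoeffs_le e) 1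
  · refine (Set.ncard_le_ncard (leadingCoeffs_vdcPoly_subset hRP.natDegree_eq hRP.natDegree_le hdeg
      ?_) (Set.toFinite _)).trans (hRP.ncard_leadingCoeffs_le j)
    omega

lemma IsPETSystem.reduceWeight_of_coeff_eq (hRP : IsPETSystem d W R P) {e : Fin d}
    (he : ∀ j < e, W j = 0) (hP : ∀ i, (P i).natDegree = e + 1 → (P i).coeff d = R.coeff d)
    (n : ℕ) :
    IsPETSystem d (reduceWeight n W e) R P := by
  refine ⟨hRP.natDegree_eq, hRP.natDegree_le, hRP.natDegree_sub_ne_zero, fun j => ?_⟩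
  rw [reduceWeight]
  split_ifs with hje hje
  · rw [hRP.leadingCoeffs_eq_empty e.2.le he (Nat.succ_ne_zero _) hje,
      Set.ncard_empty]
    exact Nat.zero_le _
  · have : leadingCoeffs R P (j + 1) = ∅ := by
      rw [leadingCoeffs, Set.image_eq_empty, Set.eq_empty_iff_forall_notMem]
      rintro i ⟨hi, hiR⟩
      rw [leadingCoeff, hRP.natDegree_eq] at hiR
      exact hiR (hP i (hje ▸ hi))
    rw [this, Set.ncard_empty]
    exact Nat.zero_le _
  · exact hRP.ncard_leadingCoeffs_le j

lemma IsPETSystem.vdc_self [Fintype ι] {W : Fin (d + 1) → ℕ} {n : ℕ} (hn : Fintype.card ι ≤ n)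
    (hRP : IsPETSystem (d + 1) W R P) (hW : W = 0) (hR : (taylor h R - R).natDegree = d)
    (hh : ∀ j, (taylor h R - R - vdcPoly h R R P j).natDegree ≠ 0) :
    IsPETSystem d (fun _ => 2 * n + 1) (taylor h R - R) (vdcPoly h R R P) := by
  have coeff_eq (i : ι) (hi : (P i).natDegree ≠ 0) : (P i).coeff (d + 1) = R.coeff (d + 1) := by
    by_contra hiR
    have mem : (P i).leadingCoeff ∈ leadingCoeffs R P (P i).natDegree :=
      ⟨i, ⟨rfl, by rwa [leadingCoeff, hRP.natDegree_eq]⟩, rfl⟩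
    rw [hRP.leadingCoeffs_eq_empty le_rfl (by simp [hW]) hi (hRP.natDegree_le i)] at mem
    exact mem
  have hdeg (j) := natDegree_vdcPoly_le (h := h) hRP.natDegree_eq.le hRP.natDegree_le
    hRP.natDegree_eq.le j
  refine ⟨hR, fun j => natDegree_le_pred (n := d + 1) (hdeg j) ?_, hh, fun j =>
    (ncard_leadingCoeffs_le_card _ _ _).trans (card_vdc_le P hn)⟩
  rcases j with _ | (i | i)
  · rw [vdcPoly, sub_self, coeff_zero]
  · rw [vdcPoly, coeff_sub, coeff_taylor_of_natDegree_le (hRP.natDegree_le i), coeff_eq i i.2,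
      sub_self]
  · rw [vdcPoly, coeff_sub, coeff_eq i i.2, sub_self]

end PETSystem

lemma exists_finset_natDegree_sub_vdcPoly_ne_zero {F ι : Type*} [Field F] [Fintype ι]
    {R : F[X]} {P : ι → F[X]} {d n : ℕ} (hd : d + 2 < ringChar F)
    (hR : R.natDegree = d + 2) (hRP : ∀ i, (R - P i).natDegree ≠ 0) (S : F[X])
    (hn : Fintype.card ι ≤ n) :
    ∃ B : Finset F, #B ≤ n + 1 ∧ 0 ∈ B ∧
      ∀ h ∉ B, ∀ j, (taylor h R - S - vdcPoly h S R P j).natDegree ≠ 0 := by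
  classical
  have hd0 : ((d + 1 + 1 : ℕ) : F) ≠ 0 := natCast_ne_zero_of_lt_ringChar (by omega) hd
  have hR0 : R.coeff (d + 2) ≠ 0 :=
    hR ▸ leadingCoeff_ne_zero.mpr (ne_zero_of_natDegree_gt (n := 0) (by omega))
  let badShift (i : ι) : F :=
    ((P i).coeff (d + 1) - R.coeff (d + 1)) / ((d + 1 + 1 : ℕ) * R.coeff (d + 2))
  refine ⟨insert 0 (univ.image badShift), (card_insert_le _ _).trans (Nat.succ_le_succ
    (card_image_le.trans hn)), mem_insert_self _ _, fun h hh j => ?_⟩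
  rw [mem_insert, not_or] at hh
  obtain ⟨h0, h_good⟩ := hh
  rcases j with _ | (i | i) <;> simp only [vdcPoly, sub_sub_sub_cancel_right]
  · rw [natDegree_taylor_sub_self hd0 hR h0]
    exact Nat.succ_ne_zero d
  · rw [← map_sub, natDegree_taylor]
    exact hRP _
  · refine (Nat.succ_pos d |>.trans_le (le_natDegree_of_ne_zero fun hcoeff => ?_)).ne'
    rw [coeff_sub, coeff_taylor_of_natDegree_le_succ hR.le] at hcoeff
    refine h_good (mem_image.mpr ⟨i, mem_univ _, ?_⟩)
    rw [div_eq_iff (mul_ne_zero hd0 hR0)]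
    linear_combination -hcoeff

section PET

variable {F : Type*} [Field F] [Fintype F] {ι : Type*} [Fintype ι] {R : F[X]} {P : ι → F[X]}
  {φ : F → ℂ} {f : ι → F → ℂ} {n : ℕ}

lemma norm_polyCount_pow_le_of_natDegree_le_one (φ : F → ℂ) (hf : ∀ i, OneBounded (f i))
    (hR : R.natDegree ≤ 1) (hP : ∀ i, (P i).natDegree ≤ 1)
    (hRP : ∀ i, (R - P i).natDegree ≠ 0) :
    ‖polyCount φ R f P‖ ^ 2 ^ (Fintype.card ι + 1) ≤ gowersPow (Fintype.card ι) φ := by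
  have e := (Fintype.equivFin ι).symm
  have eval_eq {Q : F[X]} (hQ : Q.natDegree ≤ 1) (x y : F) :
      x + Q.eval y = x + Q.coeff 1 * y + Q.coeff 0 := by
    nth_rewrite 1 [eq_X_add_C_of_natDegree_le_one hQ]
    simp [add_assoc]
  have coeff_ne (i : ι) : (P i).coeff 1 ≠ R.coeff 1 := fun hi => hRP i <| Nat.le_zero.mp <|
    natDegree_le_pred (n := 1) ((natDegree_sub_le _ _).trans (max_le hR (hP i))) (by simp [hi])
  have := norm_expect_mul_prod_linear_pow_le (fun x => φ (x + R.coeff 0)) (R.coeff 1)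
    (f := fun i x => f (e i) (x + (P (e i)).coeff 0)) (fun i x => hf _ _)
    (b := fun i => (P (e i)).coeff 1) fun i => coeff_ne (e i)
  rw [gowersPow_translate] at this
  rw [← polyCount_comp_equiv e]
  simpa only [polyCount, eval_eq hR, eval_eq (hP _)] using this

lemma norm_polyCount_pow_le_of_forall_notMem (hφ : OneBounded φ) (hf : ∀ i, OneBounded (f i))
    (S : F[X]) {B : Finset F} (hB : #B ≤ n + 1) {k s : ℕ} (hk : k ≠ 0) {C : ℝ} (hC : 0 ≤ C)
    (h_vdc : ∀ h ∉ B, ‖polyCount φ (taylor h R - S) (vdcFun φ f P) (vdcPoly h S R P)‖ ^ k ≤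
      C * (gowersPow s φ + 1 / Fintype.card F)) :
    ‖polyCount φ R f P‖ ^ (2 * k) ≤ (C + (n + 1)) * (gowersPow s φ + 1 / Fintype.card F) := by
  have hs := gowersPow_nonneg s φ
  calc ‖polyCount φ R f P‖ ^ (2 * k)
      ≤ 𝔼 h, ‖polyCount φ (taylor h R - S) (vdcFun φ f P) (vdcPoly h S R P)‖ ^ k := by
        rw [pow_mul]
        exact (pow_le_pow_left₀ (by positivity) (sq_norm_polyCount_le φ R hf P S) k).trans
          (expect_pow_le_expect_pow (fun _ => norm_nonneg _) hk)
    _ ≤ C * (gowersPow s φ + 1 / Fintype.card F) + #B / Fintype.card F :=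
        expect_le_add_card_div (fun h => pow_le_one₀ (norm_nonneg _)
          (norm_polyCount_le_one hφ _ (oneBounded_vdcFun hφ hf P) _)) B (by positivity) h_vdc
    _ ≤ C * (gowersPow s φ + 1 / Fintype.card F) +
          (n + 1) * (gowersPow s φ + 1 / Fintype.card F) := by
        rw [div_eq_mul_one_div (#B : ℝ)]
        gcongr
        · exact_mod_cast hB
        · exact le_add_of_nonneg_left hs
    _ = _ := by ring

end PET

/-- Every count along a PET system of degree `d` and weights `W` is controlled, polynomially and
uniformly in the field, by a Gowers norm of the function attached to the distinguished
polynomial. -/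
def PETBound (d : ℕ) (W : Fin d → ℕ) : Prop :=
  ∀ n : ℕ, ∃ (s k : ℕ) (C : ℝ), k ≠ 0 ∧ 0 ≤ C ∧
    ∀ {F : Type u} [Field F] [Fintype F] {ι : Type} [Fintype ι] {φ : F → ℂ} {f : ι → F → ℂ}
      {R : F[X]} {P : ι → F[X]} (_ : d < ringChar F) (_ : Fintype.card ι ≤ n) (_ : OneBounded φ)
      (_ : ∀ i, OneBounded (f i)) (_ : IsPETSystem d W R P),
      ‖polyCount φ R f P‖ ^ k ≤ C * (gowersPow s φ + 1 / Fintype.card F)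

lemma petBound_one (W : Fin 1 → ℕ) : PETBound.{u} 1 W := by
  intro n
  refine ⟨n, 2 ^ (n + 1), 1, by positivity, zero_le_one, ?_⟩
  intro F _ _ ι _ φ f R P _ hn _ hf hRP
  obtain ⟨t, rfl⟩ := Nat.exists_eq_add_of_le hn
  calc ‖polyCount φ R f P‖ ^ 2 ^ (Fintype.card ι + t + 1)
      = (‖polyCount φ R f P‖ ^ 2 ^ (Fintype.card ι + 1)) ^ 2 ^ t := by
        rw [← pow_mul, ← pow_add, add_right_comm]
    _ ≤ gowersPow (Fintype.card ι) φ ^ 2 ^ t :=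
        pow_le_pow_left₀ (by positivity) (norm_polyCount_pow_le_of_natDegree_le_one φ hf
          hRP.natDegree_eq.le hRP.natDegree_le hRP.natDegree_sub_ne_zero) _
    _ ≤ gowersPow (Fintype.card ι + t) φ := gowersPow_pow_le_gowersPow_add _ _ _
    _ ≤ 1 * (gowersPow (Fintype.card ι + t) φ + 1 / Fintype.card F) := by
        rw [one_mul]
        exact le_add_of_nonneg_right (by positivity)

lemma PETBound.of_reduceWeight {d : ℕ} {W : Fin (d + 2) → ℕ} {e : Fin (d + 2)}
    (he : ∀ j < e, W j = 0) (hW : ∀ n, PETBound.{u} (d + 2) (reduceWeight n W e)) :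
    PETBound.{u} (d + 2) W := by
  intro n
  obtain ⟨s, k, C, hk, hC, bound⟩ := hW n (2 * n + 1)
  refine ⟨s, 2 * k, C + (n + 1), by omega, by positivity, ?_⟩
  intro F _ _ ι _ φ f R P hd hn hφ hf hRP
  by_cases hP : ∃ i, (P i).natDegree = e + 1 ∧ (P i).coeff (d + 2) ≠ R.coeff (d + 2)
  · obtain ⟨i, hi, hiR⟩ := hP
    obtain ⟨B, hB, -, hB_good⟩ := exists_finset_natDegree_sub_vdcPoly_ne_zero hd hRP.natDegree_eq
      hRP.natDegree_sub_ne_zero (P i) hn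
    exact norm_polyCount_pow_le_of_forall_notMem hφ hf (P i) hB hk hC fun h hh =>
      bound hd (card_vdc_le P hn) hφ (oneBounded_vdcFun hφ hf P)
        (hRP.vdc hn he hi hiR (hB_good h hh))
  · push Not at hP
    have hs := gowersPow_nonneg s φ
    calc ‖polyCount φ R f P‖ ^ (2 * k) ≤ ‖polyCount φ R f P‖ ^ k :=
          pow_le_pow_of_le_one (norm_nonneg _) (norm_polyCount_le_one hφ R hf P) (by omega)
      _ ≤ C * (gowersPow s φ + 1 / Fintype.card F) :=
          bound hd (by omega) hφ hf (hRP.reduceWeight_of_coeff_eq he hP n)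
      _ ≤ _ := by
          gcongr
          linarith

lemma PETBound.zero_of_pred {d : ℕ} (hlow : ∀ W, PETBound.{u} (d + 1) W) :
    PETBound.{u} (d + 2) 0 := by
  intro n
  obtain ⟨s, k, C, hk, hC, bound⟩ := hlow (fun _ => 2 * n + 1) (2 * n + 1)
  refine ⟨s, 2 * k, C + (n + 1), by omega, by positivity, ?_⟩
  intro F _ _ ι _ φ f R P hd hn hφ hf hRP
  obtain ⟨B, hB, hB0, hB_good⟩ := exists_finset_natDegree_sub_vdcPoly_ne_zero hd hRP.natDegree_eq
    hRP.natDegree_sub_ne_zero R hn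
  have hd0 : ((d + 1 + 1 : ℕ) : F) ≠ 0 := natCast_ne_zero_of_lt_ringChar (by omega) hd
  exact norm_polyCount_pow_le_of_forall_notMem hφ hf R hB hk hC fun h hh =>
    bound (by omega) (card_vdc_le P hn) hφ (oneBounded_vdcFun hφ hf P) <|
      hRP.vdc_self hn rfl (natDegree_taylor_sub_self hd0 hRP.natDegree_eq fun h0 => hh (h0 ▸ hB0))
        (hB_good h hh)

lemma petBound_succ (d : ℕ) (W : Fin (d + 1) → ℕ) : PETBound.{u} (d + 1) W := by
  induction d with
  | zero => exact petBound_one W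
  | succ d ih =>
    have lex_wf : WellFounded (Pi.Lex (· > ·) (· < ·) : (Fin (d + 2) → ℕ) → _ → Prop) :=
      Pi.Lex.wellFounded _ fun _ => wellFounded_lt
    induction W using lex_wf.induction with
    | h W ih_lex =>
      by_cases hW : ∃ e, W e ≠ 0
      · obtain ⟨e, heW, he_min⟩ := wellFounded_lt.has_min {e | W e ≠ 0} hW
        refine .of_reduceWeight (e := e) (fun j hj => not_not.mp fun hjW => he_min j hjW hj)
          fun n => ih_lex _ ⟨e, fun j hj => ?_, ?_⟩
        · rw [reduceWeight, if_neg hj.not_gt, if_neg hj.ne']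
        · rw [reduceWeight, if_neg (lt_irrefl e), if_pos rfl]
          exact Nat.sub_one_lt heW
      · push Not at hW
        rw [show W = 0 from funext hW]
        exact .zero_of_pred ih

lemma exists_norm_polyCount_pow_le (d n : ℕ) : ∃ (s k : ℕ) (C : ℝ), k ≠ 0 ∧ 0 ≤ C ∧
    ∀ {F : Type u} [Field F] [Fintype F] {ι : Type} [Fintype ι] {φ : F → ℂ} {f : ι → F → ℂ}
      {R : F[X]} {P : ι → F[X]} (_ : d + 1 < ringChar F) (_ : Fintype.card ι ≤ n)
      (_ : OneBounded φ) (_ : ∀ i, OneBounded (f i)) (_ : R.natDegree ≤ d)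
      (_ : ∀ i, (P i).natDegree ≤ d) (_ : ∀ i, (R - P i).natDegree ≠ 0),
      ‖polyCount φ R f P‖ ^ k ≤ C * (gowersPow (s + 1) φ + 1 / Fintype.card F) := by
  obtain ⟨s, k, C, hk, hC, bound⟩ := petBound_succ d 0 n
  refine ⟨s, k * 2, (2 * C) ^ 2, by omega, by positivity, ?_⟩
  intro F _ _ ι _ φ f R P hd hn hφ hf hR hP hRP
  have coeff_add_X_pow {Q : F[X]} (hQ : Q.natDegree ≤ d) : (Q + X ^ (d + 1)).coeff (d + 1) = 1 := by
    rw [coeff_add, coeff_eq_zero_of_natDegree_lt (by omega), coeff_X_pow_self, zero_add]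
  have natDegree_add_X_pow {Q : F[X]} (hQ : Q.natDegree ≤ d) :
      (Q + X ^ (d + 1)).natDegree = d + 1 := by
    refine natDegree_eq_of_le_of_coeff_ne_zero ((natDegree_add_le _ _).trans ?_)
      (coeff_add_X_pow hQ ▸ one_ne_zero)
    rw [natDegree_X_pow]
    omega
  have hsys : IsPETSystem (d + 1) 0 (R + X ^ (d + 1)) fun i => P i + X ^ (d + 1) := by
    refine ⟨natDegree_add_X_pow hR, fun i => (natDegree_add_X_pow (hP i)).le, fun i => ?_,
      fun j => ?_⟩
    · rw [add_sub_add_right_eq_sub]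
      exact hRP i
    · have : leadingCoeffs (R + X ^ (d + 1)) (fun i => P i + X ^ (d + 1)) (j + 1) = ∅ := by
        rw [leadingCoeffs, Set.image_eq_empty, Set.eq_empty_iff_forall_notMem]
        rintro i ⟨-, hi⟩
        rw [leadingCoeff, natDegree_add_X_pow hR, coeff_add_X_pow hR, coeff_add_X_pow (hP i)] at hi
        exact hi rfl
      rw [this, Set.ncard_empty, Pi.zero_apply]
  have hcount := bound hd hn hφ hf hsys
  rw [polyCount_add_right] at hcount
  have hq : (1 : ℝ) / Fintype.card F ≤ 1 :=
    div_le_one_of_le₀ (by exact_mod_cast Fintype.card_pos) (by positivity)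
  simpa only [one_mul] using pow_mul_le_of_pow_le (norm_nonneg _) (gowersPow_nonneg _ _) hC
    (by positivity) hq two_ne_zero hcount ((gowersPow_sq_le s φ).trans_eq (one_mul _).symm)

lemma exists_norm_expect_addChar_pow_le_of_natDegree_le (d : ℕ) :
    ∃ (k : ℕ) (C : ℝ), k ≠ 0 ∧ 0 ≤ C ∧
      ∀ {F : Type u} [Field F] [Fintype F] {χ : AddChar F ℂ} (_ : χ.IsPrimitive)
        (_ : d < ringChar F) {Q : F[X]} (_ : Q.natDegree ≠ 0) (_ : Q.natDegree ≤ d),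
        ‖𝔼 y, χ (Q.eval y)‖ ^ k ≤ C / Fintype.card F := by
  induction d with
  | zero => exact ⟨1, 0, one_ne_zero, le_rfl, fun _ _ _ hQ hQ0 => (hQ (Nat.le_zero.mp hQ0)).elim⟩
  | succ d ih =>
    obtain ⟨k, C, hk, hC, weyl_le⟩ := ih
    obtain ⟨k', C', -, hC', weyl_eq⟩ := exists_norm_expect_addChar_pow_le.{u} d
    refine ⟨k + k', C + C', by omega, by positivity, fun {F} _ _ χ hχ hd Q hQ0 hQ => ?_⟩
    have hle : ‖𝔼 y, χ (Q.eval y)‖ ≤ 1 := (oneBounded_addChar χ _).norm_expect_le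
    rcases hQ.eq_or_lt with hQ | hQ
    · calc ‖𝔼 y, χ (Q.eval y)‖ ^ (k + k') ≤ ‖𝔼 y, χ (Q.eval y)‖ ^ k' :=
            pow_le_pow_of_le_one (norm_nonneg _) hle (by omega)
        _ ≤ C' / Fintype.card F := weyl_eq hχ hd hQ
        _ ≤ (C + C') / Fintype.card F := by gcongr; linarith
    · calc ‖𝔼 y, χ (Q.eval y)‖ ^ (k + k') ≤ ‖𝔼 y, χ (Q.eval y)‖ ^ k :=
            pow_le_pow_of_le_one (norm_nonneg _) hle (by omega)
        _ ≤ C / Fintype.card F := weyl_le hχ (by omega) hQ0 (by omega)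
        _ ≤ (C + C') / Fintype.card F := by gcongr; linarith

section Span

variable {F : Type*} [Field F]

/-- The polynomials of degree at most `d` with zero constant term. -/
noncomputable def zeroConstLE (F : Type*) [Field F] (d : ℕ) : Submodule F F[X] :=
  degreeLE F d ⊓ LinearMap.ker (lcoeff F 0)

lemma mem_zeroConstLE {d : ℕ} {Q : F[X]} :
    Q ∈ zeroConstLE F d ↔ Q.natDegree ≤ d ∧ Q.coeff 0 = 0 := by
  rw [zeroConstLE, Submodule.mem_inf, mem_degreeLE, ← natDegree_le_iff_degree_le,
    LinearMap.mem_ker, lcoeff_apply]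

lemma natDegree_ne_zero_of_mem_zeroConstLE {d : ℕ} {Q : F[X]} (hQ : Q ∈ zeroConstLE F d)
    (hQ0 : Q ≠ 0) : Q.natDegree ≠ 0 := fun hdeg => hQ0 <| by
  rw [eq_C_of_natDegree_eq_zero hdeg, (mem_zeroConstLE.mp hQ).2, C_0]

lemma smul_add_smul_notMem_span {p Q : F[X]} {s : Set F[X]} (hp : p ∉ Submodule.span F s)
    (hQ : Q = 0 ∨ Q ∉ Submodule.span F (insert p s)) {a : F} (ha : a ≠ 0) (b : F) :
    b • Q + a • p ∉ Submodule.span F s := by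
  intro hmem
  have hbQ : b • Q ∈ Submodule.span F (insert p s) :=
    (Submodule.add_mem_iff_left _ (Submodule.smul_mem _ a (Submodule.mem_span_of_mem
      (Set.mem_insert p s)))).mp (Submodule.span_mono (Set.subset_insert p s) hmem)
  have hbQ0 : b • Q = 0 := by
    by_contra hne
    obtain ⟨hb, hQ0⟩ := smul_ne_zero_iff.mp hne
    exact hQ.resolve_left hQ0 ((Submodule.smul_mem_iff _ hb).mp hbQ)
  rw [hbQ0, zero_add, Submodule.smul_mem_iff _ ha] at hmem
  exact hp hmem

end Span

section DualKernel

variable {F : Type*} [Field F] {ι : Type*} {χ : AddChar F ℂ} {p Q : F[X]} {P : ι → F[X]}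
  {f0 : F → ℂ} {f : ι → F → ℂ}

/-- The functions multiplying `D` when `𝔼 ‖D‖²` is expanded for `D` a dual function. Since
`conj (χ (Q y)) = χ x * χ (-(x + Q y))`, the phase becomes a pair of functions of points of a
polynomial progression. -/
noncomputable def dualExpansionFun (χ : AddChar F ℂ) (f0 : F → ℂ) (f : ι → F → ℂ) :
    Option (Option ι) → F → ℂ
  | none => fun x => conj (f0 x) * χ x
  | some none => fun x => χ (-x)
  | some (some i) => fun x => conj (f i x)

/-- The polynomials along which the functions `dualExpansionFun` are evaluated. -/
noncomputable def dualExpansionPoly (Q : F[X]) (P : ι → F[X]) : Option (Option ι) → F[X]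
  | none => 0
  | some none => Q
  | some (some i) => P i

lemma dualExpansionPoly_mem {V : Submodule F F[X]} (hQV : Q ∈ V) (hPV : ∀ i, P i ∈ V) :
    ∀ j, dualExpansionPoly Q P j ∈ V
  | none => V.zero_mem
  | some none => hQV
  | some (some i) => hPV i

lemma ne_dualExpansionPoly (hp : p ∉ Submodule.span F (Set.range P))
    (hQ : Q = 0 ∨ Q ∉ Submodule.span F (insert p (Set.range P))) :
    ∀ j, p ≠ dualExpansionPoly Q P j
  | none => fun h => hp (h ▸ Submodule.zero_mem _)
  | some none => by
    rintro rfl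
    exact hQ.elim (fun h => hp (h ▸ Submodule.zero_mem _)) fun h =>
      h (Submodule.mem_span_of_mem (Set.mem_insert _ _))
  | some (some i) => fun h => hp (h ▸ Submodule.mem_span_of_mem (Set.mem_range_self i))

lemma oneBounded_dualExpansionFun [Finite F] (hf0 : OneBounded f0) (hf : ∀ i, OneBounded (f i)) :
    ∀ j, OneBounded (dualExpansionFun χ f0 f j)
  | none => hf0.conj.mul (oneBounded_addChar χ _)
  | some none => oneBounded_addChar χ _
  | some (some i) => (hf i).conj

variable [Fintype ι]

/-- The integrand of the dual function: `dualFun` averages it over `y`. The polynomial `p` is the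
one attached to the function that is being dualized. -/
noncomputable def dualKernel (χ : AddChar F ℂ) (p Q : F[X]) (P : ι → F[X]) (f0 : F → ℂ)
    (f : ι → F → ℂ) (y x : F) : ℂ :=
  f0 (x - p.eval y) * (∏ i, f i (x + (P i - p).eval y)) * χ (Q.eval y)

/-- The function against which `b` is paired in the count of `x, x + p y, x + P i y` along
`f0, b, f i` twisted by `χ (Q y)`. -/
noncomputable def dualFun [Fintype F] (χ : AddChar F ℂ) (p Q : F[X]) (P : ι → F[X]) (f0 : F → ℂ)
    (f : ι → F → ℂ) (x : F) : ℂ :=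
  𝔼 y, dualKernel χ p Q P f0 f y x

lemma oneBounded_dualKernel [Finite F] (hf0 : OneBounded f0) (hf : ∀ i, OneBounded (f i)) (y : F) :
    OneBounded (dualKernel χ p Q P f0 f y) :=
  OneBounded.mul (OneBounded.mul (fun _ => hf0 _) (OneBounded.prod fun i _ => hf i _))
    (oneBounded_addChar χ _)

lemma oneBounded_dualFun [Fintype F] (hf0 : OneBounded f0) (hf : ∀ i, OneBounded (f i)) :
    OneBounded (dualFun χ p Q P f0 f) := fun x =>
  OneBounded.norm_expect_le fun y => oneBounded_dualKernel hf0 hf y x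

lemma dualKernel_add_eval (y x : F) :
    dualKernel χ p Q P f0 f y (x + p.eval y) =
      f0 x * (∏ i, f i (x + (P i).eval y)) * χ (Q.eval y) := by
  simp only [dualKernel, add_sub_cancel_right, eval_sub, add_add_sub_cancel]

/-- The integrands of dual functions whose phase is a multiple of `Q`; unlike the set for `Q`
alone, it is closed under the products arising in degree lowering. -/
def dualKernelClass (χ : AddChar F ℂ) (p Q : F[X]) (P : ι → F[X]) : Set (F → F → ℂ) :=
  {K | ∃ (b : F) (f0 : F → ℂ) (f : ι → F → ℂ), OneBounded f0 ∧ (∀ i, OneBounded (f i)) ∧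
    K = dualKernel χ p (b • Q) P f0 f}

lemma dualKernel_translate_mem_dualKernelClass (hf0 : OneBounded f0) (hf : ∀ i, OneBounded (f i))
    (t : F) : (fun y x => dualKernel χ p Q P f0 f y (x + t)) ∈ dualKernelClass χ p Q P := by
  refine ⟨1, fun x => f0 (x + t), fun i x => f i (x + t), fun x => hf0 _, fun i x => hf i _, ?_⟩
  ext y x
  simp only [dualKernel, one_smul, add_right_comm x t, sub_add_eq_add_sub]

end DualKernel

section TwistedCount

variable {F : Type*} [Field F] [Fintype F] {ι : Type*} [Fintype ι]

/-- The count of the progression `x, x + P i y` along functions `f0`, `f i`, twisted by the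
character phase `χ (Q y)`. The twist is what makes the induction on the number of polynomials
close up: Fourier analysis of a dual function creates such phases. -/
noncomputable def twistedCount (χ : AddChar F ℂ) (Q : F[X]) (P : ι → F[X]) (f0 : F → ℂ)
    (f : ι → F → ℂ) : ℂ :=
  𝔼 x, 𝔼 y, f0 x * (∏ i, f i (x + (P i).eval y)) * χ (Q.eval y)

/-- The condition under which a twisted count along polynomials spanning the same space as `s`
has no main term. -/
def HasNoMainTerm (s : Set F[X]) (Q : F[X]) (f0 : F → ℂ) : Prop :=
  Q ∉ Submodule.span F s ∨ Q = 0 ∧ 𝔼 x, f0 x = 0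

variable {χ : AddChar F ℂ} {p Q : F[X]} {P : ι → F[X]} {f0 : F → ℂ} {f : ι → F → ℂ}

lemma norm_twistedCount_le_one (hf0 : OneBounded f0) (hf : ∀ i, OneBounded (f i)) :
    ‖twistedCount χ Q P f0 f‖ ≤ 1 :=
  OneBounded.norm_expect_le fun x => OneBounded.norm_expect_le <|
    OneBounded.mul (OneBounded.mul (fun _ => hf0 x) (OneBounded.prod fun i _ => hf i _))
      (oneBounded_addChar χ _)

lemma expect_mul_dualKernel (g : F → ℂ) :
    𝔼 x, 𝔼 y, g x * dualKernel χ p Q P f0 f y x =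
      𝔼 x, 𝔼 y, g (x + p.eval y) *
        (f0 x * (∏ i, f i (x + (P i).eval y)) * χ (Q.eval y)) := by
  simp only [← dualKernel_add_eval (p := p)]
  rw [expect_comm,
    expect_comm (f := fun x y => g (x + p.eval y) * dualKernel χ p Q P f0 f y (x + p.eval y))]
  exact expect_congr rfl fun y _ =>
    (expect_add_right (p.eval y) fun x => g x * dualKernel χ p Q P f0 f y x).symm

lemma expect_addChar_mul_dualKernel (a : F) :
    𝔼 x, 𝔼 y, χ (a * x) * dualKernel χ p Q P f0 f y x =
      twistedCount χ (Q + a • p) P (fun x => χ (a * x) * f0 x) f := by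
  rw [expect_mul_dualKernel]
  refine expect_congr rfl fun x _ => expect_congr rfl fun y _ => ?_
  simp only [eval_add, eval_smul, smul_eq_mul, mul_add, AddChar.map_add_eq_mul]
  ring

lemma expect_mul_dualFun (b : F → ℂ) :
    𝔼 x, b x * dualFun χ p Q P f0 f x =
      𝔼 x, 𝔼 y, b (x + p.eval y) *
        (f0 x * (∏ i, f i (x + (P i).eval y)) * χ (Q.eval y)) := by
  simp only [dualFun, mul_expect, ← expect_mul_dualKernel]

lemma twistedCount_fin_succ {m : ℕ} (P : Fin (m + 1) → F[X]) (f : Fin (m + 1) → F → ℂ) :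
    twistedCount χ Q P f0 f =
      𝔼 x, f 0 x * dualFun χ (P 0) Q (Fin.tail P) f0 (Fin.tail f) x := by
  rw [expect_mul_dualFun]
  refine expect_congr rfl fun x _ => expect_congr rfl fun y _ => ?_
  rw [Fin.prod_univ_succ]
  simp only [Fin.tail]
  ring

lemma ofReal_expect_sq_norm_dualFun :
    ((𝔼 x, ‖dualFun χ p Q P f0 f x‖ ^ 2 : ℝ) : ℂ) =
      polyCount (dualFun χ p Q P f0 f) p (dualExpansionFun χ f0 f) (dualExpansionPoly Q P) := by
  have conj_dual_pairing :
      ((𝔼 x, ‖dualFun χ p Q P f0 f x‖ ^ 2 : ℝ) : ℂ) =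
        conj (𝔼 x, conj (dualFun χ p Q P f0 f x) * dualFun χ p Q P f0 f x) := by
    rw [ofReal_expect, conj_expect]
    refine expect_congr rfl fun x _ => ?_
    rw [map_mul, Complex.conj_conj, Complex.mul_conj, Complex.normSq_eq_norm_sq]
  rw [conj_dual_pairing, expect_mul_dualFun]
  simp only [conj_expect]
  refine expect_congr rfl fun x _ => expect_congr rfl fun y _ => ?_
  have conj_phase : conj (χ (Q.eval y)) = χ x * χ (-(x + Q.eval y)) := by
    rw [← AddChar.map_neg_eq_conj, ← AddChar.map_add_eq_mul]
    congr 1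
    ring
  simp only [Fintype.prod_option, dualExpansionFun, dualExpansionPoly, map_mul, map_prod,
    Complex.conj_conj, eval_zero, add_zero, conj_phase]
  ring

lemma sq_norm_expect_mul_dualFun_le {b : F → ℂ} (hb : OneBounded b) :
    ‖𝔼 x, b x * dualFun χ p Q P f0 f x‖ ^ 2 ≤
      ‖polyCount (dualFun χ p Q P f0 f) p (dualExpansionFun χ f0 f) (dualExpansionPoly Q P)‖ := by
  rw [← ofReal_expect_sq_norm_dualFun, Complex.norm_real,
    Real.norm_of_nonneg (expect_nonneg fun _ _ => by positivity)]
  exact hb.sq_norm_expect_mul_le _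

lemma HasNoMainTerm.eq_zero_or_notMem {s : Set F[X]} (hQ : HasNoMainTerm s Q f0) :
    Q = 0 ∨ Q ∉ Submodule.span F s :=
  hQ.symm.imp_left And.left

lemma HasNoMainTerm.add_smul {s : Set F[X]} (hp : p ∉ Submodule.span F s)
    (hQ : HasNoMainTerm (insert p s) Q f0) (χ : AddChar F ℂ) (a : F) :
    HasNoMainTerm s (Q + a • p) fun x => χ (a * x) * f0 x := by
  rcases eq_or_ne a 0 with rfl | ha
  · simp only [zero_smul, add_zero, zero_mul, AddChar.map_zero_eq_one, one_mul]
    exact hQ.imp_left fun h hmem => h (Submodule.span_mono (Set.subset_insert p s) hmem)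
  · exact .inl (by simpa using smul_add_smul_notMem_span hp hQ.eq_zero_or_notMem ha 1)

/-- All twisted counts along `P` with phase in `V` and no main term are at most `ε`. -/
def TwistedCountBound (χ : AddChar F ℂ) (V : Submodule F F[X]) (P : ι → F[X]) (ε : ℝ) : Prop :=
  ∀ ⦃Q : F[X]⦄ ⦃f0 : F → ℂ⦄ ⦃f : ι → F → ℂ⦄, Q ∈ V → OneBounded f0 → (∀ i, OneBounded (f i)) →
    HasNoMainTerm (Set.range P) Q f0 → ‖twistedCount χ Q P f0 f‖ ≤ ε

variable {V : Submodule F F[X]} {ε : ℝ}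

lemma TwistedCountBound.norm_expect_addChar_mul_dualKernel_le (hε : TwistedCountBound χ V P ε)
    (hpV : p ∈ V) (hQV : Q ∈ V) (hf0 : OneBounded f0) (hf : ∀ i, OneBounded (f i)) {a : F}
    (hQ : HasNoMainTerm (Set.range P) (Q + a • p) fun x => χ (a * x) * f0 x) :
    ‖𝔼 x, 𝔼 y, χ (a * x) * dualKernel χ p Q P f0 f y x‖ ≤ ε := by
  rw [expect_addChar_mul_dualKernel]
  exact hε (V.add_mem hQV (V.smul_mem a hpV)) ((oneBounded_addChar χ _).mul hf0) hf hQ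

lemma isPseudorandomClass_dualKernelClass (hε : TwistedCountBound χ V P ε)
    (hpV : p ∈ V) (hQV : Q ∈ V) (hp : p ∉ Submodule.span F (Set.range P))
    (hQ : Q = 0 ∨ Q ∉ Submodule.span F (insert p (Set.range P))) :
    IsPseudorandomClass χ (dualKernelClass χ p Q P) ε where
  mul_conj_mem := by
    rintro _ ⟨b, f0, f, hf0, hf, rfl⟩ _ ⟨b', f0', f', hf0', hf', rfl⟩
    refine ⟨b - b', _, _, hf0.mul hf0'.conj, fun i => (hf i).mul (hf' i).conj, ?_⟩
    ext y x
    simp only [dualKernel, sub_smul, eval_sub, ← addChar_mul_conj, map_mul, prod_mul_distrib,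
      map_prod]
    ring
  oneBounded := by
    rintro _ ⟨b, f0, f, hf0, hf, rfl⟩ y
    exact oneBounded_dualKernel hf0 hf y
  norm_expect_le := by
    rintro _ ⟨b, f0, f, hf0, hf, rfl⟩ a ha
    rw [expect_prod_type fun x y => χ (a * x) * dualKernel χ p (b • Q) P f0 f y x]
    exact hε.norm_expect_addChar_mul_dualKernel_le hpV (V.smul_mem b hQV) hf0 hf
      (.inl (smul_add_smul_notMem_span hp hQ ha b))

lemma TwistedCountBound.gowersPow_one_dualFun_le (hχ : χ.IsPrimitive)
    (hε : TwistedCountBound χ V P ε) (hpV : p ∈ V) (hQV : Q ∈ V)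
    (hp : p ∉ Submodule.span F (Set.range P)) (hf0 : OneBounded f0)
    (hf : ∀ i, OneBounded (f i)) (hQ : HasNoMainTerm (insert p (Set.range P)) Q f0) :
    gowersPow 1 (dualFun χ p Q P f0 f) ≤ ε ^ 2 := by
  obtain ⟨a, ha⟩ := (oneBounded_dualFun hf0 hf).exists_gowersPow_one_le hχ
  refine ha.trans (pow_le_pow_left₀ (norm_nonneg _) ?_ 2)
  have pairing : 𝔼 x, dualFun χ p Q P f0 f x * χ (a * x) =
      𝔼 x, 𝔼 y, χ (a * x) * dualKernel χ p Q P f0 f y x :=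
    expect_congr rfl fun x _ => by rw [dualFun, mul_comm, mul_expect]
  rw [pairing]
  exact hε.norm_expect_addChar_mul_dualKernel_le hpV hQV hf0 hf (hQ.add_smul hp χ a)

lemma twistedCount_of_isEmpty [IsEmpty ι] (χ : AddChar F ℂ) (Q : F[X]) (P : ι → F[X])
    (f0 : F → ℂ) (f : ι → F → ℂ) : twistedCount χ Q P f0 f = (𝔼 x, f0 x) * 𝔼 y, χ (Q.eval y) := by
  simp only [twistedCount, univ_eq_empty, prod_empty, mul_one, expect_mul_expect]

end TwistedCount

lemma exists_norm_expect_mul_dualFun_pow_le (d n : ℕ) : ∃ (s k : ℕ) (C : ℝ), k ≠ 0 ∧ 0 ≤ C ∧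
    ∀ {F : Type u} [Field F] [Fintype F] {ι : Type} [Fintype ι] {χ : AddChar F ℂ} {p Q : F[X]}
      {P : ι → F[X]} {f0 b : F → ℂ} {f : ι → F → ℂ} (_ : d + 1 < ringChar F)
      (_ : Fintype.card ι ≤ n) (_ : p ∈ zeroConstLE F d) (_ : Q ∈ zeroConstLE F d)
      (_ : ∀ i, P i ∈ zeroConstLE F d) (_ : p ∉ Submodule.span F (Set.range P))
      (_ : Q = 0 ∨ Q ∉ Submodule.span F (insert p (Set.range P))) (_ : OneBounded f0)
      (_ : OneBounded b) (_ : ∀ i, OneBounded (f i)),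
      ‖𝔼 x, b x * dualFun χ p Q P f0 f x‖ ^ k ≤
        C * (gowersPow (s + 1) (dualFun χ p Q P f0 f) + 1 / Fintype.card F) := by
  obtain ⟨s, k, C, hk, hC, pet⟩ := exists_norm_polyCount_pow_le.{u} d (n + 2)
  refine ⟨s, 2 * k, C, by omega, hC, ?_⟩
  intro F _ _ ι _ χ p Q P f0 b f hd hn hpV hQV hPV hp hQ hf0 hb hf
  rw [pow_mul]
  refine (pow_le_pow_left₀ (by positivity) (sq_norm_expect_mul_dualFun_le hb) k).trans ?_
  exact pet hd (by simpa using hn) (oneBounded_dualFun hf0 hf) (oneBounded_dualExpansionFun hf0 hf)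
    (mem_zeroConstLE.mp hpV).1
    (fun j => (mem_zeroConstLE.mp (dualExpansionPoly_mem hQV hPV j)).1) fun j =>
      natDegree_ne_zero_of_mem_zeroConstLE
        (Submodule.sub_mem _ hpV (dualExpansionPoly_mem hQV hPV j))
        (sub_ne_zero.mpr (ne_dualExpansionPoly hp hQ j))

lemma exists_gowersPow_dualFun_pow_le (s : ℕ) : ∃ (k : ℕ) (C : ℝ), k ≠ 0 ∧ 0 ≤ C ∧
    ∀ {F : Type u} [Field F] [Fintype F] {ι : Type} [Fintype ι] {χ : AddChar F ℂ} {p Q : F[X]}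
      {P : ι → F[X]} {f0 : F → ℂ} {f : ι → F → ℂ} {V : Submodule F F[X]} {ε : ℝ}
      (_ : χ.IsPrimitive) (_ : TwistedCountBound χ V P ε) (_ : 0 ≤ ε) (_ : ε ≤ 1) (_ : p ∈ V)
      (_ : Q ∈ V) (_ : p ∉ Submodule.span F (Set.range P)) (_ : OneBounded f0)
      (_ : ∀ i, OneBounded (f i)) (_ : HasNoMainTerm (insert p (Set.range P)) Q f0),
      gowersPow (s + 1) (dualFun χ p Q P f0 f) ^ k ≤ C * ε := by
  obtain ⟨k, C, hk, hC, lower⟩ := exists_gowersPow_pow_le.{u} s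
  refine ⟨k, C * 2, hk, by positivity, ?_⟩
  intro F _ _ ι _ χ p Q P f0 f V ε hχ h_bound hε hε1 hpV hQV hp hf0 hf hQ
  calc gowersPow (s + 1) (dualFun χ p Q P f0 f) ^ k
      ≤ C * (gowersPow 1 (dualFun χ p Q P f0 f) + ε) :=
        lower hχ (isPseudorandomClass_dualKernelClass h_bound hpV hQV hp hQ.eq_zero_or_notMem)
          hε hε1 (dualKernel_translate_mem_dualKernelClass hf0 hf) fun _ => rfl
    _ ≤ C * (ε + ε) := by
        gcongr
        exact (h_bound.gowersPow_one_dualFun_le hχ hpV hQV hp hf0 hf hQ).trans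
          (pow_le_of_le_one hε hε1 two_ne_zero)
    _ = C * 2 * ε := by ring

lemma exists_mem_Icc_pow_le {c : ℝ} (hc : 0 ≤ c) {k : ℕ} (hk : k ≠ 0) :
    ∃ ε ∈ Set.Icc (0 : ℝ) 1, ε ^ k ≤ c ∧ ∀ x ∈ Set.Icc (0 : ℝ) 1, x ^ k ≤ c → x ≤ ε := by
  have root_pow : (c ^ (k⁻¹ : ℝ)) ^ k = c := Real.rpow_inv_natCast_pow hc hk
  have root_nonneg : 0 ≤ c ^ (k⁻¹ : ℝ) := by positivity
  refine ⟨min 1 (c ^ (k⁻¹ : ℝ)), ⟨le_min zero_le_one root_nonneg, min_le_left _ _⟩, ?_, ?_⟩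
  · exact (pow_le_pow_left₀ (le_min zero_le_one root_nonneg) (min_le_right _ _) k).trans_eq root_pow
  · rintro x ⟨hx0, hx1⟩ hxc
    exact le_min hx1 ((pow_le_pow_iff_left₀ hx0 root_nonneg hk).mp (hxc.trans_eq root_pow.symm))

/-- Twisted counts along `m` linearly independent polynomials of degree at most `d` save a power
of the cardinality of the field as soon as there is no main term. -/
def TwistedCountDecay (d m : ℕ) : Prop :=
  ∃ (k : ℕ) (C : ℝ), k ≠ 0 ∧ 0 ≤ C ∧
    ∀ {F : Type u} [Field F] [Fintype F] {χ : AddChar F ℂ} (_ : χ.IsPrimitive)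
      (_ : d + 1 < ringChar F) {P : Fin m → F[X]} (_ : ∀ i, P i ∈ zeroConstLE F d)
      (_ : LinearIndependent F P) {Q : F[X]} (_ : Q ∈ zeroConstLE F d) {f0 : F → ℂ}
      (_ : OneBounded f0) {f : Fin m → F → ℂ} (_ : ∀ i, OneBounded (f i))
      (_ : HasNoMainTerm (Set.range P) Q f0),
      ‖twistedCount χ Q P f0 f‖ ^ k ≤ C / Fintype.card F

lemma twistedCountDecay_zero (d : ℕ) : TwistedCountDecay.{u} d 0 := by
  obtain ⟨k, C, hk, hC, weyl⟩ := exists_norm_expect_addChar_pow_le_of_natDegree_le.{u} d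
  refine ⟨k, C, hk, hC, ?_⟩
  intro F _ _ χ hχ hd P _ _ Q hQV f0 hf0 f _ hQ
  rw [twistedCount_of_isEmpty]
  rcases hQ with hQ | ⟨-, hf0_mean⟩
  · rw [norm_mul]
    refine (pow_le_pow_left₀ (by positivity) (mul_le_of_le_one_left (norm_nonneg _)
      hf0.norm_expect_le) k).trans (weyl hχ (by omega) ?_ (mem_zeroConstLE.mp hQV).1)
    exact natDegree_ne_zero_of_mem_zeroConstLE hQV fun h => hQ (h ▸ Submodule.zero_mem _)
  · rw [hf0_mean, zero_mul, norm_zero, zero_pow hk]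
    positivity

lemma TwistedCountDecay.succ {d m : ℕ} (h : TwistedCountDecay.{u} d m) :
    TwistedCountDecay.{u} d (m + 1) := by
  obtain ⟨k₀, C₀, hk₀, hC₀, decay⟩ := h
  obtain ⟨s, k₁, C₁, hk₁, hC₁, pet⟩ := exists_norm_expect_mul_dualFun_pow_le.{u} d m
  obtain ⟨k₂, C₂, hk₂, hC₂, lower⟩ := exists_gowersPow_dualFun_pow_le.{u} s
  refine ⟨k₁ * k₂ * k₀, (2 * ((2 * C₁) ^ k₂ * (C₂ + 1))) ^ k₀ * (C₀ + 1),
    by positivity, by positivity, ?_⟩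
  intro F _ _ χ hχ hd P hPV hP Q hQV f0 hf0 f hf hQ
  obtain ⟨(h_tail : LinearIndependent F (Fin.tail P)),
    (h_head : P 0 ∉ Submodule.span F (Set.range (Fin.tail P)))⟩ := linearIndependent_finSucc.mp hP
  have hq : (1 : ℝ) / Fintype.card F ≤ 1 :=
    div_le_one_of_le₀ (by exact_mod_cast Fintype.card_pos) (by positivity)
  obtain ⟨ε, ⟨hε, hε1⟩, ε_pow_le, le_ε⟩ :=
    exists_mem_Icc_pow_le (c := C₀ * (1 / Fintype.card F)) (by positivity) hk₀
  have h_bound : TwistedCountBound χ (zeroConstLE F d) (Fin.tail P) ε :=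
    fun Q f0 f hQV hf0 hf hQ => le_ε _ ⟨norm_nonneg _, norm_twistedCount_le_one hf0 hf⟩ <| by
      rw [mul_one_div]
      exact decay hχ hd (fun i => hPV i.succ) h_tail hQV hf0 hf hQ
  have range_eq : Set.range P = insert (P 0) (Set.range (Fin.tail P)) := by
    rw [← Fin.range_cons, Fin.cons_self_tail]
  rw [range_eq] at hQ
  have gowers_le : gowersPow (s + 1) (dualFun χ (P 0) Q (Fin.tail P) f0 (Fin.tail f)) ^ k₂ ≤
      C₂ * ε :=
    lower hχ h_bound hε hε1 (hPV 0) hQV h_head hf0 (fun i => hf i.succ) hQ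
  have count_le : ‖twistedCount χ Q P f0 f‖ ^ k₁ ≤ C₁ *
      (gowersPow (s + 1) (dualFun χ (P 0) Q (Fin.tail P) f0 (Fin.tail f)) + 1 / Fintype.card F) :=
    twistedCount_fin_succ P f ▸ pet hd (Fintype.card_fin m).le (hPV 0) hQV (fun i => hPV i.succ)
      h_head hQ.eq_zero_or_notMem hf0 (hf 0) fun i => hf i.succ
  have count_le_add : ‖twistedCount χ Q P f0 f‖ ^ (k₁ * k₂) ≤
      (2 * C₁) ^ k₂ * (C₂ + 1) * (ε + 1 / Fintype.card F) := by
    refine (pow_mul_le_of_pow_le (norm_nonneg _) (gowersPow_nonneg _ _) hC₁ (by positivity) hq hk₂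
      count_le gowers_le).trans ?_
    rw [mul_assoc]
    gcongr
    nlinarith [mul_nonneg hC₂ (by positivity : (0 : ℝ) ≤ 1 / Fintype.card F)]
  exact (pow_mul_le_of_pow_le (norm_nonneg _) hε (by positivity) (by positivity) hq hk₀
    count_le_add ε_pow_le).trans_eq (by ring)

lemma twistedCountDecay (d m : ℕ) : TwistedCountDecay.{u} d m := by
  induction m with
  | zero => exact twistedCountDecay_zero d
  | succ m ih => exact ih.succ

section Telescoping

variable {F : Type*} [Field F] [Fintype F]

lemma linearIndependent_succ_sub_zero {R M : Type*} [Ring R] [AddCommGroup M] [Module R M] {m : ℕ}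
    {v : Fin (m + 1) → M} (hv : LinearIndependent R v) :
    LinearIndependent R fun i : Fin m => v i.succ - v 0 := by
  rw [Fintype.linearIndependent_iff] at hv ⊢
  intro a ha i
  have sum_cons : ∑ j, (Fin.cons (-∑ j, a j) a : Fin (m + 1) → R) j • v j = 0 := by
    rw [← ha, Fin.sum_univ_succ]
    simp only [Fin.cons_zero, Fin.cons_succ, smul_sub, sum_sub_distrib, ← sum_smul, neg_smul]
    abel
  simpa using hv _ sum_cons i.succ

lemma twistedCount_zero {ι : Type*} [Fintype ι] (χ : AddChar F ℂ) (P : ι → F[X]) (f0 : F → ℂ)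
    (f : ι → F → ℂ) : twistedCount χ 0 P f0 f = polyCount f0 0 f P := by
  simp [twistedCount, polyCount]

lemma polyCount_const_zero {m : ℕ} (c : ℂ) (f : Fin (m + 1) → F → ℂ) (P : Fin (m + 1) → F[X]) :
    polyCount (fun _ => c) 0 f P =
      c * polyCount (f 0) 0 (fun i : Fin m => f i.succ) fun i => P i.succ - P 0 := by
  have shift := polyCount_add_right (f 0) 0 (P 0) (fun i : Fin m => f i.succ)
    fun i => P i.succ - P 0
  simp only [sub_add_cancel, zero_add] at shift
  rw [← shift]
  simp only [polyCount, mul_expect, Fin.prod_univ_succ]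

/- Halving makes the balanced function `f0 - 𝔼 f0` again `1`-bounded. -/
lemma polyCount_sub_eq {m : ℕ} (χ : AddChar F ℂ) (f0 : F → ℂ) (f : Fin (m + 1) → F → ℂ)
    (P : Fin (m + 1) → F[X]) :
    polyCount f0 0 f P - (𝔼 x, f0 x) * ∏ i, 𝔼 x, f i x =
      2 * twistedCount χ 0 P (fun x => (f0 x - 𝔼 z, f0 z) / 2) f + (𝔼 x, f0 x) *
        (polyCount (f 0) 0 (fun i : Fin m => f i.succ) (fun i => P i.succ - P 0) -
          (𝔼 x, f 0 x) * ∏ i : Fin m, 𝔼 x, f i.succ x) := by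
  have split : 2 * polyCount (fun x => (f0 x - 𝔼 z, f0 z) / 2) 0 f P =
      polyCount f0 0 f P - polyCount (fun _ => 𝔼 z, f0 z) 0 f P := by
    simp only [polyCount, mul_expect, ← expect_sub_distrib]
    refine expect_congr rfl fun x _ => expect_congr rfl fun y _ => ?_
    ring
  rw [twistedCount_zero, split, polyCount_const_zero, Fin.prod_univ_succ]
  ring

lemma expect_sub_expect {ι : Type*} [Fintype ι] [Nonempty ι] (f : ι → ℂ) :
    𝔼 i, (f i - 𝔼 j, f j) = 0 := by
  rw [expect_sub_distrib, Fintype.expect_const, sub_self]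

lemma OneBounded.sub_expect_div_two {ι : Type*} [Fintype ι] {f : ι → ℂ} (hf : OneBounded f) :
    OneBounded fun i => (f i - 𝔼 j, f j) / 2 := fun i => by
  rw [norm_div, Complex.norm_ofNat, div_le_one two_pos]
  linarith [norm_sub_le (f i) (𝔼 j, f j), hf i, hf.norm_expect_le]

lemma add_pow_mul_le_of_pow_le {a b A B v : ℝ} {k l : ℕ} (ha : 0 ≤ a) (hb : 0 ≤ b) (hA : 0 ≤ A)
    (hB : 0 ≤ B) (hv : 0 ≤ v) (hv1 : v ≤ 1) (hk : k ≠ 0) (hl : l ≠ 0) (hak : a ^ k ≤ A * v)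
    (hbl : b ^ l ≤ B * v) : (a + b) ^ (k * l) ≤ 2 ^ (k * l - 1) * (A ^ l + B ^ k) * v := by
  have ha' : a ^ (k * l) ≤ A ^ l * v := by
    rw [pow_mul]
    refine (pow_le_pow_left₀ (by positivity) hak l).trans ?_
    rw [mul_pow]
    gcongr
    exact pow_le_of_le_one hv hv1 hl
  have hb' : b ^ (k * l) ≤ B ^ k * v := by
    rw [mul_comm k, pow_mul]
    refine (pow_le_pow_left₀ (by positivity) hbl k).trans ?_
    rw [mul_pow]
    gcongr
    exact pow_le_of_le_one hv hv1 hk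
  calc (a + b) ^ (k * l) ≤ 2 ^ (k * l - 1) * (a ^ (k * l) + b ^ (k * l)) := add_pow_le ha hb _
    _ ≤ 2 ^ (k * l - 1) * (A ^ l * v + B ^ k * v) := by gcongr
    _ = 2 ^ (k * l - 1) * (A ^ l + B ^ k) * v := by ring

lemma exists_norm_polyCount_sub_pow_le (d m : ℕ) : ∃ (k : ℕ) (C : ℝ), k ≠ 0 ∧ 0 ≤ C ∧
    ∀ {F : Type u} [Field F] [Fintype F] (_ : d + 1 < ringChar F) {P : Fin m → F[X]}
      (_ : ∀ i, P i ∈ zeroConstLE F d) (_ : LinearIndependent F P) {f0 : F → ℂ}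
      (_ : OneBounded f0) {f : Fin m → F → ℂ} (_ : ∀ i, OneBounded (f i)),
      ‖polyCount f0 0 f P - (𝔼 x, f0 x) * ∏ i, 𝔼 x, f i x‖ ^ k ≤ C / Fintype.card F := by
  induction m with
  | zero => exact ⟨1, 0, one_ne_zero, le_rfl, by simp [polyCount]⟩
  | succ m ih =>
    obtain ⟨k₁, C₁, hk₁, hC₁, decay⟩ := twistedCountDecay.{u} d (m + 1)
    obtain ⟨k₂, C₂, hk₂, hC₂, ih⟩ := ih
    refine ⟨k₁ * k₂, 2 ^ (k₁ * k₂ - 1) * ((2 ^ k₁ * C₁) ^ k₂ + C₂ ^ k₁), by positivity,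
      by positivity, ?_⟩
    intro F _ _ hd P hPV hP f0 hf0 f hf
    have hχ := AddChar.FiniteField.primitiveChar_to_Complex_isPrimitive F
    rw [polyCount_sub_eq (AddChar.FiniteField.primitiveChar_to_Complex F)]
    have balanced : 𝔼 x, (f0 x - 𝔼 z, f0 z) / 2 = 0 := by
      rw [← expect_div, expect_sub_expect, zero_div]
    have balanced_le := decay hχ hd hPV hP (Submodule.zero_mem _) hf0.sub_expect_div_two hf
      (Or.inr ⟨rfl, balanced⟩)
    have rest_le := ih hd (fun i => Submodule.sub_mem _ (hPV i.succ) (hPV 0))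
      (linearIndependent_succ_sub_zero hP) (hf 0) fun i => hf i.succ
    rw [div_eq_mul_one_div] at balanced_le rest_le ⊢
    refine (pow_le_pow_left₀ (norm_nonneg _) ((norm_add_le _ _).trans (add_le_add_right
      ((norm_mul_le _ _).trans (mul_le_of_le_one_left (norm_nonneg _) hf0.norm_expect_le)) _))
      _).trans (add_pow_mul_le_of_pow_le (norm_nonneg _) (norm_nonneg _) (by positivity) hC₂
        (by positivity) ?_ hk₁ hk₂ ?_ rest_le)
    · exact div_le_one_of_le₀ (by exact_mod_cast Fintype.card_pos) (by positivity)
    · rw [norm_mul, Complex.norm_ofNat, mul_pow, mul_assoc]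
      gcongr

end Telescoping

section Reduction

open Matrix

variable {m n : Type*} [Fintype m] [DecidableEq m] [Fintype n]

lemma det_mul_transpose_ne_zero {R : Type*} [CommRing R] [LinearOrder R] [IsStrictOrderedRing R]
    {A : Matrix m n R} (hA : LinearIndependent R A.row) : (A * Aᵀ).det ≠ 0 := fun h => by
  obtain ⟨v, hv0, hv⟩ := exists_vecMul_eq_zero_iff.mpr h
  have dot_self : v ᵥ* A ⬝ᵥ v ᵥ* A = 0 := by
    rw [← mulVec_transpose A v, dotProduct_mulVec, mulVec_transpose, vecMul_vecMul, hv,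
      zero_dotProduct]
  refine hv0 (vecMul_injective_iff.mpr hA ?_)
  exact (dotProduct_self_eq_zero.mp dot_self).trans (zero_vecMul A).symm

lemma linearIndependent_row_of_det_mul_ne_zero {R : Type*} [CommRing R] [IsDomain R]
    {A : Matrix m n R} {B : Matrix n m R} (h : (A * B).det ≠ 0) : LinearIndependent R A.row :=
  LinearIndependent.of_comp B.vecMulLinear (linearIndependent_rows_of_det_ne_zero h)

lemma linearIndependent_coeff_iff {R ι : Type*} [CommRing R] {P : ι → R[X]} {d : ℕ}
    (hP : ∀ i, P i ∈ degreeLT R d) :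
    LinearIndependent R (fun i (j : Fin d) => (P i).coeff j) ↔ LinearIndependent R P := by
  refine LinearMap.linearIndependent_iff_of_injOn (v := P)
    (LinearMap.pi fun j : Fin d => lcoeff R j) fun Q hQ Q' hQ' h => ?_
  have span_le : Submodule.span R (Set.range P) ≤ degreeLT R d :=
    Submodule.span_le.mpr (Set.range_subset_iff.mpr hP)
  ext j
  by_cases hj : j < d
  · exact congrFun h ⟨j, hj⟩
  · have hdj : (d : WithBot ℕ) ≤ j := by exact_mod_cast not_lt.mp hj
    rw [coeff_eq_zero_of_degree_lt ((mem_degreeLT.mp (span_le hQ)).trans_le hdj),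
      coeff_eq_zero_of_degree_lt ((mem_degreeLT.mp (span_le hQ')).trans_le hdj)]

lemma map_mem_degreeLT {R S : Type*} [CommRing R] [CommRing S] (φ : R →+* S) {d : ℕ} {Q : R[X]}
    (hQ : Q ∈ degreeLT R d) : Q.map φ ∈ degreeLT S d :=
  mem_degreeLT.mpr (degree_map_le.trans_lt (mem_degreeLT.mp hQ))

lemma exists_forall_natDegree_le {R ι : Type*} [Semiring R] [Finite ι] (P : ι → R[X]) :
    ∃ d, ∀ i, (P i).natDegree ≤ d := by
  obtain ⟨d, hd⟩ := (Set.finite_range fun i => (P i).natDegree).bddAbove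
  exact ⟨d, fun i => hd (Set.mem_range_self i)⟩

/- The Gram determinant of the coefficient vectors over `ℤ` is nonzero, so it only has finitely
many prime factors. -/
lemma exists_linearIndependent_map_of_lt_ringChar {ι : Type*} [Finite ι] {P : ι → ℤ[X]}
    (hP : LinearIndependent ℚ fun i => (P i).map (Int.castRingHom ℚ)) :
    ∃ c : ℕ, ∀ (F : Type u) [Field F], c < ringChar F →
      LinearIndependent F fun i => (P i).map (Int.castRingHom F) := by
  classical
  cases nonempty_fintype ι
  obtain ⟨d, hd⟩ := exists_forall_natDegree_le P
  have mem_degreeLT (i : ι) : P i ∈ degreeLT ℤ (d + 1) := by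
    rw [degreeLT_succ_eq_degreeLE, mem_degreeLE]
    exact natDegree_le_iff_degree_le.mp (hd i)
  let A : Matrix ι (Fin (d + 1)) ℤ := fun i j => (P i).coeff j
  have coeff_indep : LinearIndependent ℤ A.row := by
    rw [← linearIndependent_coeff_iff fun i => map_mem_degreeLT _ (mem_degreeLT i)] at hP
    simp only [coeff_map] at hP
    exact linearIndependent_algebraMap_comp_iff.mp hP
  have det_ne : (A * Aᵀ).det ≠ 0 := det_mul_transpose_ne_zero coeff_indep
  refine ⟨(A * Aᵀ).det.natAbs, fun F _ hF => ?_⟩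
  have det_map_ne : (A.map (Int.castRingHom F) * Aᵀ.map (Int.castRingHom F)).det ≠ 0 := by
    rw [← Matrix.map_mul, ← RingHom.mapMatrix_apply, ← RingHom.map_det, eq_intCast, Ne,
      CharP.intCast_eq_zero_iff F (ringChar F), Int.natCast_dvd]
    exact Nat.not_dvd_of_pos_of_lt (Int.natAbs_pos.mpr det_ne) hF
  rw [← linearIndependent_coeff_iff fun i => map_mem_degreeLT _ (mem_degreeLT i)]
  simp only [coeff_map]
  exact linearIndependent_row_of_det_mul_ne_zero det_map_ne

end Reduction

section Counting

variable {F : Type*} [Field F] [Fintype F]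

lemma oneBounded_indicator {α : Type*} (s : Set α) : OneBounded (s.indicator (1 : α → ℂ)) :=
  fun x => by by_cases hx : x ∈ s <;> simp [hx]

lemma expect_indicator {α : Type*} [Fintype α] (s : Finset α) :
    𝔼 x, (s : Set α).indicator (1 : α → ℂ) x = #s / Fintype.card α := by
  classical
  simp [Fintype.expect_eq_sum_div_card, Set.indicator_apply]

lemma ncard_eq_card_sq_mul_polyCount {ι : Type*} [Fintype ι] (P : ι → ℤ[X]) (A₀ : Finset F)
    (A : ι → Finset F) :
    (Set.ncard {p : F × F | p.1 ∈ A₀ ∧ ∀ i, p.1 + aeval p.2 (P i) ∈ A i} : ℂ) =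
      (Fintype.card F : ℂ) ^ 2 * polyCount ((A₀ : Set F).indicator 1) 0
        (fun i => (A i : Set F).indicator 1) fun i => (P i).map (Int.castRingHom F) := by
  classical
  have card_ne : (Fintype.card F : ℂ) ≠ 0 := by exact_mod_cast Fintype.card_ne_zero
  have toFinset_eq : {p : F × F | p.1 ∈ A₀ ∧ ∀ i, p.1 + aeval p.2 (P i) ∈ A i} =
      ↑(({p | p.1 ∈ A₀ ∧ ∀ i, p.1 + aeval p.2 (P i) ∈ A i} : Finset (F × F))) := by
    simp
  have aeval_eq (i : ι) (y : F) : aeval y (P i) = ((P i).map (Int.castRingHom F)).eval y := by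
    rw [aeval_def, eval_map, algebraMap_int_eq]
  rw [toFinset_eq, Set.ncard_coe_finset, card_filter, polyCount]
  simp only [Fintype.expect_eq_sum_div_card, ← sum_div]
  rw [div_div, ← sq, mul_div_cancel₀ _ (pow_ne_zero 2 card_ne), ← Fintype.sum_prod_type']
  push_cast
  refine sum_congr rfl fun p _ => ?_
  simp only [aeval_eq, Set.indicator_apply, mem_coe, Pi.one_apply, Fintype.prod_boole, ite_and,
    eval_zero, add_zero]
  split_ifs <;> simp

lemma abs_ncard_sub_eq {m : ℕ} (hm : 1 ≤ m) (P : Fin m → ℤ[X]) (A₀ : Finset F)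
    (A : Fin m → Finset F) :
    |(Set.ncard {p : F × F | p.1 ∈ A₀ ∧ ∀ i, p.1 + aeval p.2 (P i) ∈ A i} : ℝ) -
        #A₀ * (∏ i, (#(A i) : ℝ)) / (Fintype.card F : ℝ) ^ (m - 1)| =
      (Fintype.card F : ℝ) ^ 2 * ‖polyCount ((A₀ : Set F).indicator 1) 0
        (fun i => (A i : Set F).indicator 1) (fun i => (P i).map (Int.castRingHom F)) -
          (𝔼 x, (A₀ : Set F).indicator 1 x) * ∏ i, 𝔼 x, (A i : Set F).indicator 1 x‖ := by
  have card_ne : (Fintype.card F : ℂ) ≠ 0 := by exact_mod_cast Fintype.card_ne_zero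
  have norm_card_sq : ‖(Fintype.card F : ℂ) ^ 2‖ = (Fintype.card F : ℝ) ^ 2 := by simp
  rw [← Real.norm_eq_abs, ← Complex.norm_real, ← norm_card_sq, ← norm_mul, mul_sub,
    ← ncard_eq_card_sq_mul_polyCount]
  simp only [expect_indicator, prod_div_distrib, prod_const, card_univ, Fintype.card_fin]
  obtain ⟨k, rfl⟩ := Nat.exists_eq_add_of_le' hm
  push_cast
  congr 2
  field_simp
  ring

lemma le_rpow_mul_rpow_neg_of_pow_le {x C q : ℝ} {k : ℕ} (hx : 0 ≤ x) (hC : 0 ≤ C) (hq : 0 < q)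
    (hk : k ≠ 0) (h : x ^ k ≤ C / q) : x ≤ C ^ (k : ℝ)⁻¹ * q ^ (-(k : ℝ)⁻¹) := by
  rw [Real.rpow_neg hq.le, ← div_eq_mul_inv, ← Real.div_rpow hC hq.le]
  exact (Real.le_rpow_inv_iff_of_pos hx (by positivity) (by positivity)).mpr
    (by exact_mod_cast h)

end Counting

end PolynomialProgressions

open PolynomialProgressions in
theorem statement1_general.{u} (m : ℕ) (hm : 1 ≤ m) (P : Fin m → Polynomial ℤ)
    (hP0 : ∀ i, (P i).coeff 0 = 0)
    (hind : LinearIndependent ℚ fun i => (P i).map (Int.castRingHom ℚ)) :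
    ∃ c γ C : ℝ, 0 < c ∧ 0 < γ ∧ 0 < C ∧
      ∀ (F : Type u) [Field F] [Fintype F], c ≤ (ringChar F : ℝ) →
        ∀ (A₀ : Finset F) (A : Fin m → Finset F),
          |((Set.ncard {p : F × F |
                p.1 ∈ A₀ ∧ ∀ i, p.1 + aeval p.2 (P i) ∈ A i} : ℕ) : ℝ)
              - (A₀.card : ℝ) * (∏ i, ((A i).card : ℝ)) / (Fintype.card F : ℝ) ^ (m - 1)|
            ≤ C * (Fintype.card F : ℝ) ^ ((2 : ℝ) - (m + 1 : ℝ) * γ) := by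
  obtain ⟨d, hd⟩ := exists_forall_natDegree_le P
  obtain ⟨c, indep⟩ := exists_linearIndependent_map_of_lt_ringChar.{u} hind
  obtain ⟨k, C, hk, hC, count⟩ := exists_norm_polyCount_sub_pow_le.{u} d m
  have : (0 : ℝ) < k := by exact_mod_cast hk.bot_lt
  refine ⟨c + d + 2, 1 / (k * (m + 1)), C ^ (k : ℝ)⁻¹ + 1, by positivity, by positivity,
    by positivity, fun F _ _ hF A₀ A => ?_⟩
  have hF' : c + d + 2 ≤ ringChar F := by exact_mod_cast hF
  have card_pos : (0 : ℝ) < Fintype.card F := by exact_mod_cast Fintype.card_pos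
  have norm_le := le_rpow_mul_rpow_neg_of_pow_le (norm_nonneg _) hC card_pos hk <|
    count (by omega) (fun i => mem_zeroConstLE.mpr
      ⟨Polynomial.natDegree_map_le.trans (hd i), by simp [hP0]⟩) (indep F (by omega))
      (oneBounded_indicator (A₀ : Set F)) fun i => oneBounded_indicator (A i : Set F)
  have exponent : (2 : ℝ) - (m + 1) * (1 / (k * (m + 1))) = 2 + -(k : ℝ)⁻¹ := by
    field_simp
    ring
  rw [abs_ncard_sub_eq hm, exponent, Real.rpow_add card_pos, Real.rpow_two, mul_left_comm]
  gcongr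
  refine norm_le.trans ?_
  gcongr
  linarith

/-- For linearly independent `P₁,…,Pₘ ∈ ℤ[y]` with zero constant term,
there exist `c, γ, C > 0` such that for every finite field `𝔽_q` of characteristic at
least `c` and every `A ⊆ 𝔽_q`,
`|#{(x,y) : x, x+P₁(y), …, x+Pₘ(y) ∈ A} − |A|^{m+1}/q^{m−1}| ≤ C·q^{2−(m+1)γ}`. -/
theorem statement1 (m : ℕ) (hm : 1 ≤ m) (P : Fin m → Polynomial ℤ)
    (hP0 : ∀ i, (P i).coeff 0 = 0)
    (hind : LinearIndependent ℚ fun i => (P i).map (Int.castRingHom ℚ)) :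
    ∃ c γ C : ℝ, 0 < c ∧ 0 < γ ∧ 0 < C ∧
      ∀ (F : Type) [Field F] [Fintype F], c ≤ (ringChar F : ℝ) →
        ∀ A : Finset F,
          |((Set.ncard {p : F × F |
                p.1 ∈ A ∧ ∀ i, p.1 + Polynomial.aeval p.2 (P i) ∈ A} : ℕ) : ℝ)
              - (A.card : ℝ) ^ (m + 1) / (Fintype.card F : ℝ) ^ (m - 1)|
            ≤ C * (Fintype.card F : ℝ) ^ ((2 : ℝ) - (m + 1 : ℝ) * γ) := by
  obtain ⟨c, γ, C, hc, hγ, hC, h⟩ := statement1_general m hm P hP0 hind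
  exact ⟨c, γ, C, hc, hγ, hC, fun F _ _ hF A => by
    simpa [Finset.prod_const, pow_succ'] using h F hF A fun _ => A⟩
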